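/- arXiv:2212.10332 — 4 statements merged into one kernel-verified Lean document; each statement's English description precedes it below -/
import Mathlib

section
/- Let R be a complete Noetherian local integral domain and let M, N be finitely generated R-modules. Then Ext^1_R(M,N) is weakly cotorsion, i.e., Ext^1_R(Q, Ext^1_R(M,N)) = 0, where Q is the fraction field of R. -/
open CategoryTheory

universe u

/-- `ext1 R M N` is `Ext¹_R(M, N)`. -/
noncomputable abbrev ext1 (R : Type u) [CommRing R] (M N : ModuleCat.{u} R) : ModuleCat R :=
  ((Ext R (ModuleCat R) 1).obj (Opposite.op M)).obj N

open IsLocalRing in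
/-- A finitely generated module over a complete Noetherian local ring is complete. -/
theorem isAdicComplete_of_finite (R : Type*) [CommRing R] [IsNoetherianRing R] [IsLocalRing R]
    [IsAdicComplete (maximalIdeal R) R] (E : Type*) [AddCommGroup E] [Module R E]
    [Module.Finite R E] : IsAdicComplete (maximalIdeal R) E := by
  have hsurj : Function.Surjective (AdicCompletion.of (maximalIdeal R) E) := by
    intro y
    obtain ⟨t, rfl⟩ := AdicCompletion.ofTensorProduct_surjective_of_finite (maximalIdeal R) E y
    induction t with
    | zero => exact ⟨0, by simp⟩
    | tmul r x =>
      obtain ⟨r, rfl⟩ := AdicCompletion.of_surjective (maximalIdeal R) R r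
      refine ⟨r • x, ?_⟩
      rw [AdicCompletion.ofTensorProduct_tmul]
      ext n
      rw [map_smul]
      rfl
    | add a b ha hb =>
      obtain ⟨a', ha'⟩ := ha
      obtain ⟨b', hb'⟩ := hb
      exact ⟨a' + b', by simp [ha', hb']⟩
  have := AdicCompletion.of_surjective_iff.mp hsurj
  exact { }

/-- If multiplication by `s ∈ I` is bijective on `V`, then for every projective presentation
`π : P → V` and every `I`-adically complete module `E`, maps `ker π → E` extend to `P`. -/
theorem exists_extend_of_bijective_smul {R : Type*} [CommRing R] {I : Ideal R} {s : R}
    (hs : s ∈ I) {P V E : Type*} [AddCommGroup P] [Module R P] [Module.Projective R P]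
    [AddCommGroup V] [Module R V] [AddCommGroup E] [Module R E] [IsAdicComplete I E]
    (hV : Function.Bijective (fun v : V => s • v)) (π : P →ₗ[R] V)
    (hπ : Function.Surjective π) (f : LinearMap.ker π →ₗ[R] E) :
    ∃ g : P →ₗ[R] E, g ∘ₗ (LinearMap.ker π).subtype = f := by
  let e : V ≃ₗ[R] V := LinearEquiv.ofBijective (LinearMap.lsmul R V s) hV
  obtain ⟨T, hT⟩ := Module.projective_lifting_property π (e.symm.toLinearMap ∘ₗ π) hπ
  have hsT (p : P) : s • π (T p) = π p := by
    have h : π (T p) = e.symm (π p) := LinearMap.congr_fun hT p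
    rw [h]
    exact e.apply_symm_apply (π p)
  let A : P →ₗ[R] LinearMap.ker π :=
    (LinearMap.id - s • T).codRestrict _ (fun p => by simp [hsT])
  have hsI (n : ℕ) (x : E) : s ^ n • x ∈ (I ^ n • ⊤ : Submodule R E) :=
    Submodule.smul_mem_smul (Ideal.pow_mem_pow hs n) trivial
  let S (n : ℕ) : P →ₗ[R] E := ∑ i ∈ Finset.range n, s ^ i • (f ∘ₗ A ∘ₗ T ^ i)
  have hS {m n : ℕ} (hmn : m ≤ n) (p : P) : S n p - S m p ∈ (I ^ m • ⊤ : Submodule R E) := by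
    induction n, hmn using Nat.le_induction with
    | base => simp
    | succ n hmn ih =>
      have h : S (n + 1) p = S n p + s ^ n • f (A ((T ^ n) p)) := by
        simp [S, Finset.sum_range_succ]
      rw [h, add_sub_right_comm]
      exact add_mem ih (Submodule.smul_mono_left (Ideal.pow_le_pow_right hmn) (hsI n _))
  let F (n : ℕ) : P →ₗ[R] E ⧸ (I ^ n • ⊤ : Submodule R E) := Submodule.mkQ _ ∘ₗ S n
  have hF {m n : ℕ} (hmn : m ≤ n) : Submodule.factorPow I E hmn ∘ₗ F n = F m := by
    ext p
    exact (Submodule.Quotient.eq _).mpr (hS hmn p)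
  refine ⟨IsAdicComplete.lift I F hF, ?_⟩
  have hTk (p : P) (hp : p ∈ LinearMap.ker π) : T p ∈ LinearMap.ker π := by
    apply hV.1
    simpa [hsT] using hp
  let T' : LinearMap.ker π →ₗ[R] LinearMap.ker π := T.restrict hTk
  have hT' (n : ℕ) (k : LinearMap.ker π) : (T ^ n) (k : P) = ((T' ^ n) k : LinearMap.ker π) := by
    induction n with
    | zero => rfl
    | succ n ih => rw [pow_succ', pow_succ', Module.End.mul_apply, Module.End.mul_apply, ih]; rfl
  have hA (k : LinearMap.ker π) : A (k : P) = k - s • T' k := rfl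
  have hSk (n : ℕ) (k : LinearMap.ker π) : S n k = f k - s ^ n • f ((T' ^ n) k) := by
    induction n with
    | zero => simp [S]
    | succ n ih =>
      have h : S (n + 1) k = S n k + s ^ n • f (A ((T ^ n) k)) := by
        simp [S, Finset.sum_range_succ]
      rw [h, ih, hT', hA, pow_succ' T', Module.End.mul_apply, map_sub, map_smul, smul_sub,
        smul_smul, ← pow_succ]
      abel
  apply DFunLike.coe_injective
  apply IsHausdorff.funext I
  intro n k
  rw [LinearMap.comp_apply, IsAdicComplete.mk_lift]
  refine (Submodule.Quotient.eq _).mpr ?_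
  rw [Submodule.subtype_apply, hSk, sub_sub_cancel_left]
  exact neg_mem (hsI n _)

/-- A homology module is finite if every cycle is, up to a boundary, in the image of a map from
a finite module landing in the cycles. -/
theorem CategoryTheory.ShortComplex.moduleCat_finite_homology {R : Type*} [CommRing R]
    (S : ShortComplex (ModuleCat R)) {A : Type*} [AddCommGroup A] [Module R A]
    [Module.Finite R A] (φ : A →ₗ[R] S.X₂) (hφ : ∀ a, S.g (φ a) = 0)
    (h : ∀ x : S.X₂, S.g x = 0 → ∃ a y, x = φ a + S.f y) : Module.Finite R S.homology := by
  let ψ : A →ₗ[R] LinearMap.ker S.g.hom := φ.codRestrict _ hφ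
  have hfin : Module.Finite R S.moduleCatLeftHomologyData.H := by
    refine Module.Finite.of_surjective ((LinearMap.range S.moduleCatToCycles).mkQ ∘ₗ ψ) ?_
    intro z
    obtain ⟨⟨x, hx⟩, rfl⟩ := Submodule.Quotient.mk_surjective _ z
    obtain ⟨a, y, rfl⟩ := h x hx
    refine ⟨a, (Submodule.Quotient.eq _).mpr ⟨-y, ?_⟩⟩
    ext
    change S.f (-y) = φ a - (φ a + S.f y)
    rw [map_neg]
    abel
  exact Module.Finite.equiv S.moduleCatHomologyIso.symm.toLinearEquiv

namespace CategoryTheory.ProjectiveResolution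

variable {R : Type u} [CommRing R] {M : ModuleCat.{u} R} (P : ProjectiveResolution M)

/-- The augmentation of a projective resolution of a module, as a linear map. -/
noncomputable def augmentation : P.complex.X 0 →ₗ[R] M :=
  ModuleCat.Hom.hom (P.π.f 0 : P.complex.X 0 ⟶ M)

theorem augmentation_surjective : Function.Surjective P.augmentation :=
  (ModuleCat.epi_iff_surjective (P.π.f 0)).mp inferInstance

theorem augmentation_d (x : P.complex.X 1) : P.augmentation (P.complex.d 1 0 x) = 0 :=
  ConcreteCategory.congr_hom P.complex_d_comp_π_f_zero x

theorem exists_d_eq {x : P.complex.X 0} (hx : P.augmentation x = 0) :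
    ∃ y : P.complex.X 1, P.complex.d 1 0 y = x :=
  (ShortComplex.moduleCat_exact_iff _).mp P.exact₀ x hx

/-- The differential `P₁ → P₀` of a projective resolution, with values in the first syzygy. -/
noncomputable def toSyzygy : P.complex.X 1 →ₗ[R] LinearMap.ker P.augmentation :=
  (P.complex.d 1 0).hom.codRestrict _ P.augmentation_d

theorem toSyzygy_surjective : Function.Surjective P.toSyzygy := by
  rintro ⟨x, hx⟩
  obtain ⟨y, rfl⟩ := P.exists_d_eq hx
  exact ⟨y, rfl⟩

theorem toSyzygy_d (x : P.complex.X 2) : P.toSyzygy (P.complex.d 2 1 x) = 0 :=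
  Subtype.ext ((ShortComplex.mk _ _ (P.complex.d_comp_d 2 1 0)).moduleCat_zero_apply x)

/-- Every 1-cocycle factors through the first syzygy. -/
theorem exists_comp_toSyzygy {N : ModuleCat.{u} R} (c : P.complex.X 1 ⟶ N)
    (hc : P.complex.d 2 1 ≫ c = 0) :
    ∃ f : LinearMap.ker P.augmentation →ₗ[R] N, f ∘ₗ P.toSyzygy = c.hom := by
  have hker : LinearMap.ker P.toSyzygy ≤ LinearMap.ker c.hom := by
    intro x hx
    have hx' : P.complex.d 1 0 x = 0 := congrArg Subtype.val (LinearMap.mem_ker.mp hx)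
    obtain ⟨y, rfl⟩ := (ShortComplex.moduleCat_exact_iff _).mp (P.exact_succ 0) x hx'
    exact ConcreteCategory.congr_hom hc y
  refine ⟨(LinearMap.ker P.toSyzygy).liftQ c.hom hker ∘ₗ
    (P.toSyzygy.quotKerEquivOfSurjective P.toSyzygy_surjective).symm, ?_⟩
  ext x
  have h : (P.toSyzygy.quotKerEquivOfSurjective P.toSyzygy_surjective).symm (P.toSyzygy x) =
      Submodule.Quotient.mk x := by
    rw [LinearEquiv.symm_apply_eq]
    rfl
  simp [h]

/-- `Ext¹` is the middle homology of `Hom(P₀, N) → Hom(P₁, N) → Hom(P₂, N)`. -/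
noncomputable def ext1Iso (N : ModuleCat.{u} R) :
    ext1 R M N ≅ ((P.complex.linearYonedaObj R N).sc' 0 1 2).homology :=
  P.isoExt 1 N ≪≫ HomologicalComplex.homologyIsoSc' _ 0 1 2 (by simp) (by simp)

end CategoryTheory.ProjectiveResolution

/-- `Ext¹(M, N)` vanishes if maps from the kernel of any projective presentation of `M` to `N`
extend. -/
theorem subsingleton_ext1_of_extend {R : Type u} [CommRing R] {M N : ModuleCat.{u} R}
    (h : ∀ (P : ModuleCat.{u} R) [Module.Projective R P] (π : P →ₗ[R] M),
      Function.Surjective π → ∀ f : LinearMap.ker π →ₗ[R] N,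
        ∃ g : P →ₗ[R] N, g ∘ₗ (LinearMap.ker π).subtype = f) :
    Subsingleton (ext1 R M N) := by
  let P := ProjectiveResolution.of M
  have : Module.Projective R (P.complex.X 0) :=
    (IsProjective.iff_projective (P.complex.X 0)).mpr (P.projective 0)
  refine ModuleCat.subsingleton_of_isZero (.of_iso ?_ (P.ext1Iso N))
  rw [← ShortComplex.exact_iff_isZero_homology, ShortComplex.moduleCat_exact_iff]
  intro c hc
  obtain ⟨f, hf⟩ := P.exists_comp_toSyzygy c hc
  obtain ⟨g, rfl⟩ := h _ P.augmentation P.augmentation_surjective f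
  exact ⟨ModuleCat.ofHom g, ModuleCat.hom_ext hf⟩

/-- `Ext¹` between finitely generated modules over a Noetherian ring is finitely generated. -/
theorem finite_ext1 {R : Type u} [CommRing R] [IsNoetherianRing R] (M N : ModuleCat.{u} R)
    [Module.Finite R M] [Module.Finite R N] : Module.Finite R (ext1 R M N) := by
  let P := ProjectiveResolution.of M
  have : Module.Projective R (P.complex.X 0) :=
    (IsProjective.iff_projective (P.complex.X 0)).mpr (P.projective 0)
  obtain ⟨n, τ, hτ⟩ := Module.Finite.exists_fin' R M
  obtain ⟨α, hα⟩ := Module.projective_lifting_property τ P.augmentation hτ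
  obtain ⟨β, hβ⟩ := Module.projective_lifting_property P.augmentation τ P.augmentation_surjective
  have hα' (x) : τ (α x) = P.augmentation x := LinearMap.congr_fun hα x
  have hβ' (x) : P.augmentation (β x) = τ x := LinearMap.congr_fun hβ x
  let a : LinearMap.ker P.augmentation →ₗ[R] LinearMap.ker τ :=
    α.restrict fun x hx => by simpa [hα'] using hx
  let b : LinearMap.ker τ →ₗ[R] LinearMap.ker P.augmentation :=
    β.restrict fun x hx => by simpa [hβ'] using hx
  let D : P.complex.X 0 →ₗ[R] LinearMap.ker P.augmentation :=
    (LinearMap.id - β ∘ₗ α).codRestrict _ fun x => by simp [hα', hβ']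
  let φ : (LinearMap.ker τ →ₗ[R] N) →ₗ[R] (P.complex.X 1 ⟶ N) :=
    ModuleCat.homLinearEquiv.symm.toLinearMap ∘ₗ LinearMap.lcomp R N (a ∘ₗ P.toSyzygy)
  have hfin : Module.Finite R ((P.complex.linearYonedaObj R N).sc' 0 1 2).homology := by
    refine ShortComplex.moduleCat_finite_homology _ φ (fun u => ?_) (fun c hc => ?_)
    · refine ModuleCat.hom_ext (LinearMap.ext fun x => ?_)
      change u (a (P.toSyzygy (P.complex.d 2 1 x))) = 0
      rw [P.toSyzygy_d, map_zero, map_zero]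
    · obtain ⟨f, hf⟩ := P.exists_comp_toSyzygy c hc
      refine ⟨f ∘ₗ b, ModuleCat.ofHom (f ∘ₗ D), ModuleCat.hom_ext (LinearMap.ext fun x => ?_)⟩
      change c.hom x = f (b (a (P.toSyzygy x))) + f (D (P.complex.d 1 0 x))
      rw [← hf, ← map_add]
      refine congrArg f (Subtype.ext ?_)
      exact (add_sub_cancel (β (α (P.complex.d 1 0 x))) _).symm
  exact Module.Finite.equiv (P.ext1Iso N).symm.toLinearEquiv

/-- Over a complete Noetherian local integral domain, `Ext¹_R(M,N)` of finitely generated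
modules is weakly cotorsion: `Ext¹_R(Q, Ext¹_R(M,N)) = 0` where `Q = Frac(R)`. -/
theorem ext_one_weakly_cotorsion_of_finite
    (R : Type u) [CommRing R] [IsNoetherianRing R] [IsLocalRing R] [IsDomain R]
    [IsAdicComplete (IsLocalRing.maximalIdeal R) R]
    (M N : Type u) [AddCommGroup M] [Module R M] [Module.Finite R M]
    [AddCommGroup N] [Module R N] [Module.Finite R N] :
    Subsingleton (ext1 R (ModuleCat.of R (FractionRing R))
      (ext1 R (ModuleCat.of R M) (ModuleCat.of R N))) := by
  have hfin := finite_ext1 (ModuleCat.of R M) (ModuleCat.of R N)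
  have hcomplete := isAdicComplete_of_finite R (ext1 R (ModuleCat.of R M) (ModuleCat.of R N))
  by_cases hR : IsField R
  · have e : R ≃ₗ[R] FractionRing R := LinearEquiv.ofBijective (Algebra.linearMap R _)
      (hR.localization_map_bijective (M := nonZeroDivisors R) (by simp))
    have : Module.Projective R (FractionRing R) := .of_equiv e
    have := (IsProjective.iff_projective (FractionRing R)).mp this
    exact ModuleCat.subsingleton_of_isZero (isZero_Ext_succ_of_projective _ _ 0)
  · obtain ⟨s, hs, hs0⟩ := Submodule.exists_mem_ne_zero_of_ne_bot
      (mt IsLocalRing.isField_iff_maximalIdeal_eq.mpr hR)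
    have hs0' : algebraMap R (FractionRing R) s ≠ 0 := by simpa using hs0
    have hbij : Function.Bijective (fun v : FractionRing R => s • v) := by
      simp_rw [Algebra.smul_def]
      exact mulLeft_bijective₀ _ hs0'
    refine subsingleton_ext1_of_extend fun P _ π hπ f => ?_
    exact exists_extend_of_bijective_smul hs hbij π hπ f
end

section
/- Let R be a d-dimensional complete Noetherian local Cohen-Macaulay ring with canonical module ω_R. Then every nonzero endomorphism of H^d_m(R) is surjective if and only if R is an integral domain. -/
open CategoryTheory IsLocalRing

universe u

/-- A Noetherian local ring is Cohen–Macaulay if some system of parameters, i.e. a regular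
sequence in the maximal ideal of length equal to the Krull dimension, exists. -/
def IsCohenMacaulayLocalRing (R : Type u) [CommRing R] [IsLocalRing R] : Prop :=
  ∃ rs : List R, (∀ r ∈ rs, r ∈ maximalIdeal R) ∧
    RingTheory.Sequence.IsRegular R rs ∧
    (rs.length : WithBot (WithTop ℕ)) = ringKrullDim R

section ExtNaturality

variable {R : Type u} [CommRing R]

namespace ChainComplex

/-- Precomposition with a morphism of chain complexes, as a morphism of complexes of
homomorphisms to `Y`. -/
noncomputable def linearYonedaObjMap {K L : ChainComplex (ModuleCat.{u} R) ℕ} (φ : K ⟶ L)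
    (Y : ModuleCat.{u} R) : L.linearYonedaObj R Y ⟶ K.linearYonedaObj R Y :=
  (HomologicalComplex.unopFunctor (ModuleCat R) (ComplexShape.down ℕ)).map
    (((((linearYoneda R (ModuleCat.{u} R)).obj Y).rightOp.mapHomologicalComplex _).map φ).op)

end ChainComplex

lemma isoExt_naturality {X X' : ModuleCat.{u} R} (g : X' ⟶ X) (P : ProjectiveResolution X)
    (P' : ProjectiveResolution X') (φ : ProjectiveResolution.Hom P' P g) (n : ℕ) (Y : ModuleCat.{u} R) :
    ((Ext R (ModuleCat.{u} R) n).map g.op).app Y ≫ (P'.isoExt n Y).hom =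
      (P.isoExt n Y).hom ≫
        HomologicalComplex.homologyMap (ChainComplex.linearYonedaObjMap φ.hom Y) n := by
  have h2 := congrArg Quiver.Hom.unop <| HomologicalComplex.homologyOp_hom_naturality
    (ChainComplex.linearYonedaObjMap φ.hom Y) n
  let B' := ((P'.complex.linearYonedaObj R Y).homologyOp n).hom.unop
  let B := ((P.complex.linearYonedaObj R Y).homologyOp n).hom.unop
  have e' : (P'.isoExt n Y).inv = B' ≫ (P'.isoLeftDerivedObj ((linearYoneda R (ModuleCat.{u} R)).obj Y).rightOp n).hom.unop := rfl
  have e : (P.isoExt n Y).inv = B ≫ (P.isoLeftDerivedObj ((linearYoneda R (ModuleCat.{u} R)).obj Y).rightOp n).hom.unop := rfl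
  rw [← Iso.inv_comp_eq, ← Category.assoc, ← Iso.eq_comp_inv]
  rw [e, e']
  have h1 := congrArg Quiver.Hom.unop <|
    ProjectiveResolution.isoLeftDerivedObj_hom_naturality g P' P φ.hom
    (by simpa using φ.hom_f_zero_comp_π_f_zero) ((linearYoneda R (ModuleCat.{u} R)).obj Y).rightOp n
  exact (Category.assoc _ _ _).trans ((congrArg (B ≫ ·) h1).trans
    ((Category.assoc _ _ _).symm.trans ((congrArg (· ≫ ((P'.isoLeftDerivedObj
      ((linearYoneda R (ModuleCat.{u} R)).obj Y).rightOp n).hom.unop)) h2).trans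
        (Category.assoc _ _ _))))

end ExtNaturality

section ExtComparison
open CategoryTheory.Abelian HomologicalComplex
variable {R : Type u} [CommRing R]
variable {X : ModuleCat.{u} R} (P : ProjectiveResolution X) (n : ℕ) (Y : ModuleCat.{u} R)

/-- The morphism underlying a cocycle of the `Hom` complex. -/
noncomputable def cocycleHom : (P.complex.linearYonedaObj R Y).cycles n →ₗ[R]
    (P.complex.X n ⟶ Y) :=
  ((P.complex.linearYonedaObj R Y).iCycles n).hom

lemma d_comp_cocycleHom (c : (P.complex.linearYonedaObj R Y).cycles n) :
    P.complex.d (n + 1) n ≫ cocycleHom P n Y c = 0 :=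
  congrArg (fun f => f.hom c) ((P.complex.linearYonedaObj R Y).iCycles_d n (n + 1))

variable {n Y} in
lemma extMk_congr {f g : P.complex.X n ⟶ Y} (h : f = g) (hf : P.complex.d (n + 1) n ≫ f = 0)
    (hg : P.complex.d (n + 1) n ≫ g = 0) :
    P.extMk f (n + 1) rfl hf = P.extMk g (n + 1) rfl hg := by
  subst h; rfl

lemma extMk_zero_index_eq_zero_iff (f : P.complex.X 0 ⟶ Y) (hf : P.complex.d 1 0 ≫ f = 0) :
    P.extMk f 1 rfl hf = 0 ↔ f = 0 := by
  simp only [← P.extEquivCohomologyClass.apply_eq_iff_eq,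
    ProjectiveResolution.extEquivCohomologyClass_extMk, P.extEquivCohomologyClass_zero,
    CochainComplex.HomComplex.CohomologyClass.mk_eq_zero_iff]
  rw [CochainComplex.HomComplex.Cocycle.toSingleMk_mem_coboundaries_iff _ _ _ _ _ 1 (by lia)]
  constructor
  · rintro ⟨g, hg⟩
    have : P.cochainComplex.d (-(0 : ℕ)) 1 = 0 :=
      (CochainComplex.isZero_of_isStrictlyLE P.cochainComplex 0 1).eq_of_tgt _ _
    rw [this, Limits.zero_comp] at hg
    rw [← cancel_epi (P.cochainComplexXIso (-(0:ℕ)) 0 rfl).hom]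
    rw [← hg, Limits.comp_zero]
  · rintro rfl
    exact ⟨0, by simp⟩

/-- The class in `Ext` of a cocycle. -/
noncomputable def cyclesToExt :
    ((P.complex.linearYonedaObj R Y).cycles n) →ₗ[R] Ext X Y n where
  toFun c := P.extMk (cocycleHom P n Y c) (n + 1) rfl (d_comp_cocycleHom P n Y c)
  map_add' a b := by
    rw [P.add_extMk]
    exact extMk_congr P (map_add _ _ _) _ _
  map_smul' r a := by
    rw [RingHom.id_apply, Ext.smul_eq_comp_mk₀, P.extMk_comp_mk₀]
    refine extMk_congr P ?_ _ _
    rw [Linear.comp_smul, Category.comp_id, map_smul]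

lemma cyclesToExt_apply (c : (P.complex.linearYonedaObj R Y).cycles n) :
    cyclesToExt P n Y c =
      P.extMk (cocycleHom P n Y c) (n + 1) rfl (d_comp_cocycleHom P n Y c) := rfl

lemma cyclesToExt_surjective : Function.Surjective (cyclesToExt P n Y) := by
  intro α
  obtain ⟨f, hf, rfl⟩ := P.extMk_surjective α (n + 1) rfl
  let K := P.complex.linearYonedaObj R Y
  let k : ModuleCat.of R R ⟶ K.X n :=
    ModuleCat.ofHom (LinearMap.toSpanSingleton R (P.complex.X n ⟶ Y) f)
  have hk : k ≫ K.d n (n + 1) = 0 := by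
    ext
    change P.complex.d (n+1) n ≫ ((1 : R) • f) = 0
    rw [one_smul, hf]
  refine ⟨(K.liftCycles k (n + 1) (by simp) hk).hom (1 : R), ?_⟩
  have h := congrArg (fun f => f.hom (1 : R)) (K.liftCycles_i k (n + 1) (by simp) hk)
  exact extMk_congr P (show cocycleHom P n Y _ = f from h.trans (one_smul R f))
    (d_comp_cocycleHom P n Y _) hf

lemma iCycles_injective (K : CochainComplex (ModuleCat.{u} R) ℕ) :
    Function.Injective (K.iCycles n).hom :=
  (ModuleCat.mono_iff_injective _).1 inferInstance

lemma homologyπ_eq_zero_iff (K : CochainComplex (ModuleCat.{u} R) ℕ) (c : K.cycles n) :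
    (K.homologyπ n).hom c = 0 ↔
      ∃ x, (K.d ((ComplexShape.up ℕ).prev n) n).hom x = (K.iCycles n).hom c := by
  have h := (ShortComplex.exact_of_g_is_cokernel (ShortComplex.mk _ _ (K.toCycles_comp_homologyπ _ n))
    (K.homologyIsCokernel _ n rfl))
  rw [ShortComplex.moduleCat_exact_iff] at h
  constructor
  · intro hc
    obtain ⟨x, rfl⟩ := h c hc
    exact ⟨x, (congrArg (fun f => f.hom x) (K.toCycles_i ((ComplexShape.up ℕ).prev n) n)).symm⟩
  · rintro ⟨x, hx⟩
    have : (K.toCycles ((ComplexShape.up ℕ).prev n) n).hom x = c := by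
      apply iCycles_injective
      rw [← hx]
      exact (congrArg (fun f => f.hom x) (K.toCycles_i ((ComplexShape.up ℕ).prev n) n))
    rw [← this]
    exact (congrArg (fun f => f.hom x) (K.toCycles_comp_homologyπ ((ComplexShape.up ℕ).prev n) n))

lemma ker_cyclesToExt : LinearMap.ker ((P.complex.linearYonedaObj R Y).homologyπ n).hom =
    LinearMap.ker (cyclesToExt P n Y) := by
  ext c
  rw [LinearMap.mem_ker, LinearMap.mem_ker, homologyπ_eq_zero_iff, cyclesToExt_apply]
  cases n with
  | zero =>
    rw [extMk_zero_index_eq_zero_iff, CochainComplex.prev_nat_zero]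
    have : (P.complex.linearYonedaObj R Y).d 0 0 = 0 := HomologicalComplex.shape _ _ _ (by simp)
    rw [this]
    exact ⟨fun ⟨x, h⟩ => h.symm, fun h => ⟨0, h.symm⟩⟩
  | succ p =>
    rw [P.extMk_eq_zero_iff _ _ _ _ p rfl, CochainComplex.prev_nat_succ]
    rfl

/-- Comparison of the homology of the `Hom` complex with `Ext`. -/
noncomputable def homologyEquivExt :
    ((P.complex.linearYonedaObj R Y).homology n) ≃ₗ[R] Ext X Y n :=
  (LinearMap.quotKerEquivOfSurjective ((P.complex.linearYonedaObj R Y).homologyπ n).hom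
    ((ModuleCat.epi_iff_surjective _).1 inferInstance)).symm ≪≫ₗ
  Submodule.quotEquivOfEq _ _ (ker_cyclesToExt P n Y) ≪≫ₗ
  LinearMap.quotKerEquivOfSurjective _ (cyclesToExt_surjective P n Y)

lemma homologyEquivExt_homologyπ (c : (P.complex.linearYonedaObj R Y).cycles n) :
    homologyEquivExt P n Y (((P.complex.linearYonedaObj R Y).homologyπ n).hom c) =
      cyclesToExt P n Y c := by
  have : (LinearMap.quotKerEquivOfSurjective ((P.complex.linearYonedaObj R Y).homologyπ n).hom
    ((ModuleCat.epi_iff_surjective _).1 inferInstance)).symm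
      (((P.complex.linearYonedaObj R Y).homologyπ n).hom c) = Submodule.Quotient.mk c := by
    rw [LinearEquiv.symm_apply_eq]; rfl
  simp only [homologyEquivExt, LinearEquiv.trans_apply, this]
  rfl

/-- The left-derived `Ext` functor agrees with morphisms in the derived category. -/
noncomputable def extEquiv : (((Ext R (ModuleCat.{u} R) n).obj (Opposite.op X)).obj Y) ≃ₗ[R]
    Abelian.Ext X Y n :=
  (P.isoExt n Y).toLinearEquiv ≪≫ₗ homologyEquivExt P n Y

lemma extEquiv_naturality {X' : ModuleCat.{u} R} (g : X' ⟶ X)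
    (P' : ProjectiveResolution X')
    (t : ((Ext R (ModuleCat.{u} R) n).obj (Opposite.op X)).obj Y) :
    extEquiv P' n Y ((((Ext R (ModuleCat.{u} R) n).map g.op).app Y).hom t) =
      (Ext.mk₀ g).comp (extEquiv P n Y t) (zero_add _) := by
  let φ : ProjectiveResolution.Hom P' P g :=
    ⟨ProjectiveResolution.lift g P' P, by
      simpa using! ProjectiveResolution.lift_commutes_zero g P' P⟩
  obtain ⟨c, hc⟩ := (ModuleCat.epi_iff_surjective ((P.complex.linearYonedaObj R Y).homologyπ n)).1
    inferInstance ((P.isoExt n Y).hom.hom t)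
  have h1 := congrArg (fun f => f.hom t) (isoExt_naturality g P P' φ n Y)
  have h2 : extEquiv P n Y t = cyclesToExt P n Y c := by
    rw [← homologyEquivExt_homologyπ]
    exact congrArg (homologyEquivExt P n Y) hc.symm
  have h3 := congrArg (fun f => f.hom c)
    (homologyπ_naturality (ChainComplex.linearYonedaObjMap φ.hom Y) n)
  have h4 := congrArg (fun f => f.hom c)
    (cyclesMap_i (ChainComplex.linearYonedaObjMap φ.hom Y) n)
  have h5 : cocycleHom P' n Y
      ((cyclesMap (ChainComplex.linearYonedaObjMap φ.hom Y) n).hom c) =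
      φ.hom.f n ≫ cocycleHom P n Y c := h4
  rw [h2, cyclesToExt_apply, ProjectiveResolution.mk₀_comp_extMk _ _ _ _ φ,
    ← extMk_congr P' h5 (d_comp_cocycleHom P' n Y _), ← cyclesToExt_apply,
    ← homologyEquivExt_homologyπ]
  refine congrArg (homologyEquivExt P' n Y) ((h1.trans ?_).trans h3)
  exact congrArg (homologyMap (ChainComplex.linearYonedaObjMap φ.hom Y) n).hom hc.symm

end ExtComparison

section QuotProj
variable {R : Type u} [CommRing R]

/-- The projection `R ⧸ I ⟶ R ⧸ J` for `I ≤ J`. -/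
noncomputable def quotProj {I J : Ideal R} (h : I ≤ J) :
    ModuleCat.of R (R ⧸ I) ⟶ ModuleCat.of R (R ⧸ J) :=
  ModuleCat.ofHom (Submodule.mapQ I J LinearMap.id h)

lemma quotProj_comp {I J K : Ideal R} (h : I ≤ J) (h' : J ≤ K) :
    quotProj h ≫ quotProj h' = quotProj (h.trans h') := by
  ext
  rfl

lemma quotProj_surjective {I J : Ideal R} (h : I ≤ J) :
    Function.Surjective (Submodule.mapQ I J LinearMap.id h) := fun y => by
  obtain ⟨x, rfl⟩ := Submodule.Quotient.mk_surjective _ y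
  exact ⟨Submodule.Quotient.mk x, rfl⟩

lemma ker_quotProj_sup_span_singleton (I : Ideal R) (r : R) :
    LinearMap.ker (Submodule.mapQ I (I ⊔ Ideal.span {r}) LinearMap.id le_sup_left) =
      LinearMap.range (r • LinearMap.id : (R ⧸ I) →ₗ[R] (R ⧸ I)) := by
  ext y
  obtain ⟨x, rfl⟩ := Submodule.Quotient.mk_surjective _ y
  rw [LinearMap.mem_ker, Submodule.mapQ_apply, Submodule.Quotient.mk_eq_zero, LinearMap.id_apply,
    sup_comm, Ideal.mem_span_singleton_sup]
  constructor
  · rintro ⟨a, b, hb, rfl⟩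
    refine ⟨Submodule.Quotient.mk a, (Submodule.Quotient.eq I).mpr ?_⟩
    simpa [mul_comm] using hb
  · rintro ⟨z, hz⟩
    obtain ⟨a, rfl⟩ := Submodule.Quotient.mk_surjective _ z
    exact ⟨a, x - r * a, neg_sub (r * a) x ▸ I.neg_mem ((Submodule.Quotient.eq I).mp hz), by ring⟩

end QuotProj

section Colimit
open CategoryTheory.Abelian Limits Opposite
variable {R : Type u} [CommRing R]

lemma exists_localCohomology_colimit (J : Ideal R) (i : ℕ) (M : ModuleCat.{u} R) :
    ∃ ι : ∀ k : ℕ, Abelian.Ext (ModuleCat.of R (R ⧸ J ^ k)) M i →ₗ[R] (localCohomology J i).obj M,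
      (∀ (k l : ℕ) (h : k ≤ l) t, ι l ((Ext.mk₀ (quotProj (Ideal.pow_le_pow_right h))).comp t
        (zero_add _)) = ι k t) ∧
      (∀ x, ∃ k t, ι k t = x) ∧
      (∀ k t, ι k t = 0 → ∃ (l : ℕ) (h : k ≤ l),
        (Ext.mk₀ (quotProj (Ideal.pow_le_pow_right h : J ^ l ≤ J ^ k))).comp t (zero_add _) = 0) := by
  let D := localCohomology.diagram (localCohomology.idealPowersDiagram J) i
  let G := D ⋙ (evaluation (ModuleCat.{u} R) (ModuleCat.{u} R)).obj M
  have : HasColimit D := localCohomology.hasColimitDiagram.{u, 0} _ i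
  let c : Cocone G := ((evaluation (ModuleCat.{u} R) (ModuleCat.{u} R)).obj M).mapCocone
    (colimit.cocone D)
  let hc : IsColimit c := isColimitOfPreserves _ (colimit.isColimit D)
  let P (k : ℕ) : ProjectiveResolution (ModuleCat.of R (R ⧸ J ^ k)) :=
    projectiveResolution _
  have hnat (k l : ℕ) (h : k ≤ l) (f : op (op k) ⟶ op (op l)) (t : G.obj (op (op k))) :
      extEquiv (P l) i M ((G.map f).hom t) =
        (Ext.mk₀ (quotProj (Ideal.pow_le_pow_right h : J ^ l ≤ J ^ k))).comp (extEquiv (P k) i M t)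
          (zero_add _) :=
    extEquiv_naturality (P k) i M (quotProj (Ideal.pow_le_pow_right h : J ^ l ≤ J ^ k)) (P l) t
  have : PreservesFilteredColimitsOfSize.{0, 0} (forget (ModuleCat.{u} R)) :=
    preservesSmallestFilteredColimits_of_preservesFilteredColimits _
  have : PreservesColimit G (forget (ModuleCat.{u} R)) := inferInstance
  let ι (k : ℕ) : Abelian.Ext (ModuleCat.of R (R ⧸ J ^ k)) M i →ₗ[R]
      (localCohomology J i).obj M :=
    (c.ι.app (op (op k))).hom.comp (extEquiv (P k) i M).symm.toLinearMap
  have hι (k : ℕ) (t : G.obj (op (op k))) :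
      ι k (extEquiv (P k) i M t) = (c.ι.app (op (op k))).hom t :=
    congrArg (c.ι.app (op (op k))).hom ((extEquiv (P k) i M).symm_apply_apply t)
  refine ⟨ι, fun k l h t => ?_, fun x => ?_, fun k t ht => ?_⟩
  · obtain ⟨t, rfl⟩ := (extEquiv (P k) i M).surjective t
    have f : op (op k) ⟶ op (op l) := (homOfLE h).op.op
    rw [← hnat k l h f t, hι]
    exact (congrArg (fun f => f.hom t) (c.w f)).trans (hι k t).symm
  · obtain ⟨k, t, ht⟩ := Concrete.isColimit_exists_rep G hc x
    exact ⟨k.unop.unop, extEquiv (P k.unop.unop) i M t, (hι _ t).trans ht⟩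
  · obtain ⟨t, rfl⟩ := (extEquiv (P k) i M).surjective t
    replace ht := (hι k t).symm.trans ht
    obtain ⟨l, f, g, h⟩ := Concrete.isColimit_exists_of_rep_eq G hc (i := op (op k))
      (j := op (op k)) t (0 : G.obj (op (op k)))
      (ht.trans (map_zero (c.ι.app (op (op k))).hom).symm)
    have hkl : k ≤ l.unop.unop := leOfHom f.unop.unop
    refine ⟨l.unop.unop, hkl, ?_⟩
    rw [← hnat k _ hkl f t]
    exact (congrArg (extEquiv (P l.unop.unop) i M) (h.trans (map_zero (G.map g).hom))).trans
      (map_zero _)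

end Colimit

section ExtRegular
open CategoryTheory.Abelian RingTheory.Sequence
variable {R : Type u} [CommRing R]

lemma Ext.smul_eq_zero_of_mem_annihilator {N M : ModuleCat.{u} R} {r : R}
    (hr : r ∈ Module.annihilator R N) {i : ℕ} (x : Ext N M i) : r • x = 0 := by
  have h : r • 𝟙 N = 0 := by
    ext y
    exact Module.mem_annihilator.mp hr y
  calc r • x = r • ((Ext.mk₀ (𝟙 N)).comp x (zero_add i)) := by rw [Ext.mk₀_id_comp]
    _ = (Ext.mk₀ (r • 𝟙 N)).comp x (zero_add i) := by rw [Ext.mk₀_smul, Ext.smul_comp]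
    _ = 0 := by rw [h, Ext.mk₀_zero, Ext.zero_comp]

lemma Ext.exists_comp_extClass_of_smul_eq_zero {N M : ModuleCat.{u} R} {r : R}
    (hr : IsSMulRegular M r) {i : ℕ} (x : Ext N M (i + 1)) (hx : r • x = 0) :
    ∃ y : Ext N (ModuleCat.of R (QuotSMulTop r M)) i,
      y.comp hr.smulShortComplex_shortExact.extClass rfl = x :=
  Ext.covariant_sequence_exact₁ N hr.smulShortComplex_shortExact x
    ((Ext.smul_eq_comp_mk₀ x r).symm.trans hx) rfl

lemma Ext.eq_zero_of_isWeaklyRegular {N : ModuleCat.{u} R} {rs : List R}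
    (hN : ∀ r ∈ rs, ∃ n : ℕ, r ^ n ∈ Module.annihilator R N) {M : ModuleCat.{u} R}
    (hM : IsWeaklyRegular M rs) {i : ℕ} (hi : i < rs.length) (x : Ext N M i) : x = 0 := by
  induction rs generalizing M i with
  | nil => simp at hi
  | cons r rs ih =>
    rw [isWeaklyRegular_cons_iff] at hM
    have hr : ∀ x : Ext N M i, r • x = 0 → x = 0 := by
      intro x hx
      cases i with
      | zero =>
        obtain ⟨g, rfl⟩ := (Ext.linearEquiv₀ (R := R)).symm.surjective x
        rw [← map_smul, LinearEquiv.map_eq_zero_iff] at hx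
        rw [LinearEquiv.map_eq_zero_iff]
        ext y
        apply hM.1
        change r • g.hom y = r • 0
        rw [smul_zero]
        exact congrArg (fun f => f.hom y) hx
      | succ j =>
        obtain ⟨y, rfl⟩ := Ext.exists_comp_extClass_of_smul_eq_zero hM.1 x hx
        have hy : y = 0 := ih (fun s hs => hN s (List.mem_cons_of_mem r hs))
          (M := ModuleCat.of R (QuotSMulTop r M)) hM.2 (by simpa using hi) y
        subst hy
        exact Ext.zero_comp N _ _ _ _
    obtain ⟨n, hn⟩ := hN r List.mem_cons_self
    have hreg : IsSMulRegular (Ext N M i) r := by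
      rw [isSMulRegular_iff_right_eq_zero_of_smul]
      exact hr
    exact (hreg.pow n).right_eq_zero_of_smul (Ext.smul_eq_zero_of_mem_annihilator hn x)

lemma Ext.eq_zero_of_quotSMulTop {N M : ModuleCat.{u} R} {r : R} (hr : IsSMulRegular M r) {n : ℕ}
    (h : ∀ i < n, ∀ x : Ext N M i, x = 0) {i : ℕ} (hi : i + 1 < n)
    (x : Ext N (ModuleCat.of R (QuotSMulTop r M)) i) : x = 0 := by
  obtain ⟨z, rfl⟩ := Ext.covariant_sequence_exact₃ N hr.smulShortComplex_shortExact x rfl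
    (h (i + 1) hi _)
  have hz : z = 0 := h i (by omega) z
  subst hz
  exact Ext.zero_comp N _ _ _ _

/-- The isomorphism of Rees computing `Ext` in the degree of the length of a regular sequence. -/
lemma Ext.nonempty_linearEquiv_of_isWeaklyRegular {N : ModuleCat.{u} R} {rs : List R}
    (hN : ∀ r ∈ rs, r ∈ Module.annihilator R N) {M : ModuleCat.{u} R}
    (hM : IsWeaklyRegular M rs) :
    Nonempty (Ext N M rs.length ≃ₗ[R] (N →ₗ[R] M ⧸ (Ideal.ofList rs • ⊤ : Submodule R M))) := by
  induction rs generalizing M with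
  | nil =>
    have h : (Ideal.ofList ([] : List R) • ⊤ : Submodule R M) = ⊥ := by simp
    exact ⟨Ext.linearEquiv₀ (R := R) ≪≫ₗ ModuleCat.homLinearEquiv (S := R) ≪≫ₗ
      LinearEquiv.congrRight (Submodule.quotEquivOfEqBot _ h).symm⟩
  | cons r rs ih =>
    have hM' := hM
    rw [isWeaklyRegular_cons_iff] at hM
    obtain ⟨e⟩ := ih (fun s hs => hN s (List.mem_cons_of_mem r hs))
      (M := ModuleCat.of R (QuotSMulTop r M)) hM.2
    let δ : Ext N (ModuleCat.of R (QuotSMulTop r M)) rs.length →ₗ[R] Ext N M (rs.length + 1) :=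
      Ext.postcompOfLinear hM.1.smulShortComplex_shortExact.extClass R N rfl
    have hδ : Function.Bijective δ := by
      constructor
      · rw [injective_iff_map_eq_zero]
        intro y hy
        obtain ⟨z, rfl⟩ := Ext.covariant_sequence_exact₃ N hM.1.smulShortComplex_shortExact y rfl hy
        have hz : z = 0 :=
          Ext.eq_zero_of_isWeaklyRegular (fun s hs => ⟨1, by simpa using hN s hs⟩) hM' (by simp) z
        subst hz
        exact Ext.zero_comp N _ _ _ _
      · intro x
        exact Ext.exists_comp_extClass_of_smul_eq_zero hM.1 x
          (Ext.smul_eq_zero_of_mem_annihilator (hN r List.mem_cons_self) x)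
    exact ⟨(LinearEquiv.ofBijective δ hδ).symm ≪≫ₗ e ≪≫ₗ
      LinearEquiv.congrRight (Submodule.quotOfListConsSMulTopEquivQuotSMulTopInner M r rs).symm⟩

end ExtRegular

section ExtDescent
open CategoryTheory.Abelian RingTheory.Sequence
variable {R : Type u} [CommRing R]

lemma Ext.eq_zero_of_mk₀_comp_eq_zero {N' N : Type u} [AddCommGroup N'] [AddCommGroup N]
    [Module R N'] [Module R N] {p : N' →ₗ[R] N} (hp : Function.Surjective p) {rs : List R}
    (hN : ∀ r ∈ rs, ∃ n : ℕ, r ^ n ∈ Module.annihilator R N') {M : ModuleCat.{u} R}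
    (hM : IsWeaklyRegular M rs) {i : ℕ} (hi : i ≤ rs.length) (t : Ext (ModuleCat.of R N) M i)
    (ht : (Ext.mk₀ (ModuleCat.ofHom p)).comp t (zero_add i) = 0) : t = 0 := by
  cases i with
  | zero =>
    obtain ⟨g, rfl⟩ := (Ext.linearEquiv₀ (R := R)).symm.surjective t
    have : Epi (ModuleCat.ofHom p) := (ModuleCat.epi_iff_surjective _).mpr hp
    have hpg : ModuleCat.ofHom p ≫ g = 0 := by
      apply (Ext.linearEquiv₀ (R := R)).symm.injective
      rw [map_zero, ← ht]
      exact (Ext.mk₀_comp_mk₀ _ _).symm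
    rw [(cancel_epi (ModuleCat.ofHom p)).mp (hpg.trans Limits.comp_zero.symm), map_zero]
  | succ i =>
    obtain ⟨x, rfl⟩ := Ext.contravariant_sequence_exact₃ (LinearMap.shortExact_shortComplexKer hp) M t ht
      (add_comm 1 i)
    have hx : x = 0 := Ext.eq_zero_of_isWeaklyRegular
      (fun r hr => (hN r hr).imp fun n hn => Module.mem_annihilator.mpr fun (y : LinearMap.ker p) =>
        Subtype.ext (Module.mem_annihilator.mp hn y.1)) hM hi x
    subst hx
    exact Ext.comp_zero _ _ _ _ _

lemma Ext.exists_mk₀_comp_eq_of_smul_eq_zero {N' N : Type u} [AddCommGroup N'] [AddCommGroup N]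
    [Module R N'] [Module R N] {p : N' →ₗ[R] N} (hp : Function.Surjective p) {r : R}
    (hr : LinearMap.ker p = LinearMap.range (r • LinearMap.id : N' →ₗ[R] N')) {rs : List R}
    (hN : ∀ r ∈ rs, ∃ n : ℕ, r ^ n ∈ Module.annihilator R N') {M : ModuleCat.{u} R}
    (hM : IsWeaklyRegular M rs) {i : ℕ} (hi : i ≤ rs.length) (t : Ext (ModuleCat.of R N') M i)
    (ht : r • t = 0) :
    ∃ t', (Ext.mk₀ (ModuleCat.ofHom p)).comp t' (zero_add i) = t := by
  let φ : N' →ₗ[R] LinearMap.ker p := (r • LinearMap.id).codRestrict _ fun x => by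
    rw [hr]
    exact LinearMap.mem_range_self _ x
  have hφ : Function.Surjective φ := fun y => by
    obtain ⟨x, hx⟩ := LinearMap.mem_range.mp (hr.le y.2)
    exact ⟨x, Subtype.ext hx⟩
  have hφr : ModuleCat.ofHom φ ≫ ModuleCat.ofHom (LinearMap.ker p).subtype =
      r • 𝟙 (ModuleCat.of R N') := rfl
  refine Ext.contravariant_sequence_exact₂ (LinearMap.shortExact_shortComplexKer hp) M t
    (Ext.eq_zero_of_mk₀_comp_eq_zero hφ hN hM hi _ ?_)
  refine (Ext.mk₀_comp_mk₀_assoc _ _ _).trans ?_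
  refine (congrArg (fun f => (Ext.mk₀ f).comp t (zero_add i)) hφr).trans ?_
  rw [Ext.mk₀_smul, Ext.smul_comp, Ext.mk₀_id_comp, ht]

lemma exists_pow_mem_annihilator_quotient {I J : Ideal R} {k : ℕ} (hk : J ^ k ≤ I) {rs : List R}
    (hrs : Ideal.ofList rs ≤ J) : ∀ r ∈ rs, ∃ n : ℕ, r ^ n ∈ Module.annihilator R (R ⧸ I) :=
  fun r hr => ⟨k, by
    rw [Ideal.annihilator_quotient]
    exact hk (Ideal.pow_mem_pow (hrs (Ideal.subset_span hr)) k)⟩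

lemma Ext.exists_quotProj_comp_eq {I K J : Ideal R} {k : ℕ} (hk : J ^ k ≤ I) {rs : List R}
    (hrs : Ideal.ofList rs ≤ J) {M : ModuleCat.{u} R} (hM : IsWeaklyRegular M rs) {i : ℕ}
    (hi : i ≤ rs.length) (ys : List R) (hIK : I ≤ K) (hK : K = I ⊔ Ideal.ofList ys)
    (t : Ext (ModuleCat.of R (R ⧸ I)) M i) (ht : ∀ y ∈ ys, y • t = 0) :
    ∃ t', (Ext.mk₀ (quotProj hIK)).comp t' (zero_add i) = t := by
  induction ys generalizing I with
  | nil =>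
    obtain rfl : K = I := by simpa using hK
    refine ⟨t, (congrArg (fun f => (Ext.mk₀ f).comp t (zero_add i)) ?_).trans (Ext.mk₀_id_comp t)⟩
    ext
    rfl
  | cons y ys ih =>
    obtain ⟨t₁, rfl⟩ := Ext.exists_mk₀_comp_eq_of_smul_eq_zero
      (quotProj_surjective (le_sup_left : I ≤ I ⊔ Ideal.span {y}))
      (ker_quotProj_sup_span_singleton I y)
      (exists_pow_mem_annihilator_quotient hk hrs) hM hi t (ht y List.mem_cons_self)
    have hK' : K = I ⊔ Ideal.span {y} ⊔ Ideal.ofList ys := by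
      rw [hK, Ideal.ofList_cons, sup_assoc]
    obtain ⟨t₂, rfl⟩ := ih (hk.trans le_sup_left) (le_sup_left.trans hK'.ge) hK' t₁ fun z hz => by
      refine Ext.eq_zero_of_mk₀_comp_eq_zero
        (quotProj_surjective (le_sup_left : I ≤ I ⊔ Ideal.span {y}))
        (exists_pow_mem_annihilator_quotient hk hrs) hM hi _ ?_
      rw [Ext.comp_smul]
      exact ht z (List.mem_cons_of_mem y hz)
    refine ⟨t₂, ?_⟩
    rw [← quotProj_comp le_sup_left (le_sup_left.trans hK'.ge), ← Ext.mk₀_comp_mk₀_assoc]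
    rfl

end ExtDescent

section Generator
open CategoryTheory.Abelian RingTheory.Sequence
variable {R : Type u} [CommRing R]

/-- The elements of `H` killed by `I` form the submodule generated by `q`, which is isomorphic to
`R ⧸ I`. -/
structure IsTorsionGenerator {H : Type*} [AddCommGroup H] [Module R H] (I : Ideal R) (q : H) :
    Prop where
  exists_smul_eq : ∀ h : H, (∀ r ∈ I, r • h = 0) → ∃ r : R, r • q = h
  smul_eq_zero_iff : ∀ r : R, r • q = 0 ↔ r ∈ I

lemma exists_generator_linearMap_quotient {I I' : Ideal R} (h : I' = I) :
    ∃ φ : (R ⧸ I) →ₗ[R] (R ⧸ I'), (∀ ψ, ∃ r : R, r • φ = ψ) ∧ ∀ r : R, r • φ = 0 ↔ r ∈ I := by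
  subst h
  refine ⟨LinearMap.id, fun ψ => ?_, fun r => ?_⟩
  · obtain ⟨r, hr⟩ := Submodule.Quotient.mk_surjective _ (ψ (Submodule.Quotient.mk 1))
    refine ⟨r, Submodule.linearMap_qext _ (LinearMap.ext_ring ?_)⟩
    refine Eq.trans ?_ hr
    exact congrArg Submodule.Quotient.mk (mul_one r)
  · rw [← Submodule.Quotient.mk_eq_zero I' (x := r)]
    constructor
    · intro h
      refine Eq.trans ?_ (congrArg (fun f => f (Submodule.Quotient.mk 1)) h)
      exact congrArg Submodule.Quotient.mk (mul_one r).symm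
    · intro h
      refine Submodule.linearMap_qext _ (LinearMap.ext_ring ?_)
      refine Eq.trans ?_ h
      exact congrArg Submodule.Quotient.mk (mul_one r)

lemma Ext.exists_generator {ys : List R} (hys : IsWeaklyRegular R ys) :
    ∃ t : Ext (ModuleCat.of R (R ⧸ Ideal.ofList ys)) (ModuleCat.of R R) ys.length,
      (∀ t', ∃ r : R, r • t = t') ∧ ∀ r : R, r • t = 0 ↔ r ∈ Ideal.ofList ys := by
  obtain ⟨e⟩ := Ext.nonempty_linearEquiv_of_isWeaklyRegular
    (N := ModuleCat.of R (R ⧸ Ideal.ofList ys)) (M := ModuleCat.of R R) (rs := ys)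
    (fun r hr => by
      rw [Ideal.annihilator_quotient]
      exact Ideal.subset_span hr) hys
  obtain ⟨φ, h₁, h₂⟩ := exists_generator_linearMap_quotient
    (I' := (Ideal.ofList ys • ⊤ : Submodule R R)) (Ideal.mul_top (Ideal.ofList ys))
  refine ⟨e.symm φ, fun t' => ?_, fun r => ?_⟩
  · obtain ⟨r, hr⟩ := h₁ (e t')
    refine ⟨r, ?_⟩
    rw [← map_smul]
    exact (congrArg e.symm hr).trans (e.symm_apply_apply t')
  · rw [← h₂, ← map_smul]
    exact e.symm.map_eq_zero_iff

lemma localCohomology_exists_pow_smul_eq_zero {J : Ideal R} {i : ℕ} {M : ModuleCat.{u} R}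
    (h : (localCohomology J i).obj M) : ∃ k : ℕ, ∀ r ∈ J ^ k, r • h = 0 := by
  obtain ⟨ι, -, hι, -⟩ := exists_localCohomology_colimit J i M
  obtain ⟨k, t, rfl⟩ := hι h
  refine ⟨k, fun r hr => ?_⟩
  rw [← map_smul, Ext.smul_eq_zero_of_mem_annihilator
    (N := ModuleCat.of R (R ⧸ J ^ k)) ((Ideal.annihilator_quotient (I := J ^ k)).ge hr), map_zero]

lemma localCohomology_exists_isTorsionGenerator {J : Ideal R} {ys : List R}
    (hys : IsWeaklyRegular R ys) (hJ : Ideal.ofList ys ≤ J) {k : ℕ} (hk : J ^ k ≤ Ideal.ofList ys)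
    {d : ℕ} (hd : ys.length = d) :
    ∃ q : (localCohomology J d).obj (ModuleCat.of R R), IsTorsionGenerator (Ideal.ofList ys) q := by
  subst hd
  obtain ⟨ι, hcomp, hsurj, hker⟩ :=
    exists_localCohomology_colimit J ys.length (ModuleCat.of R R)
  obtain ⟨t, ht, ht'⟩ := Ext.exists_generator hys
  have hinj (l : ℕ) : Function.Injective (ι l) := by
    rw [injective_iff_map_eq_zero]
    intro s hs
    obtain ⟨l', hl, h⟩ := hker l s hs
    exact Ext.eq_zero_of_mk₀_comp_eq_zero (quotProj_surjective (Ideal.pow_le_pow_right hl))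
      (exists_pow_mem_annihilator_quotient (le_refl (J ^ l')) hJ) (M := ModuleCat.of R R) hys le_rfl s h
  refine ⟨ι k ((Ext.mk₀ (quotProj hk)).comp t (zero_add _)), fun h hh => ?_, fun r => ?_⟩
  · obtain ⟨l, s, rfl⟩ := hsurj h
    have hkl : J ^ max k l ≤ J ^ l := Ideal.pow_le_pow_right (le_max_right k l)
    have hs : ∀ y ∈ ys, y • ((Ext.mk₀ (quotProj hkl)).comp s (zero_add _)) = 0 := fun y hy => by
      apply hinj
      rw [map_smul, map_zero, hcomp _ _ (le_max_right k l) s, hh y (Ideal.subset_span hy)]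
    have hmax : J ^ max k l ≤ Ideal.ofList ys :=
      (Ideal.pow_le_pow_right (le_max_left k l)).trans hk
    obtain ⟨s', hs'⟩ := Ext.exists_quotProj_comp_eq (le_refl (J ^ max k l)) hJ (M := ModuleCat.of R R) hys le_rfl
      ys hmax (sup_eq_right.mpr hmax).symm _ hs
    obtain ⟨r, rfl⟩ := ht s'
    refine ⟨r, ?_⟩
    rw [← map_smul, ← Ext.comp_smul, ← hcomp _ _ (le_max_right k l) s, ← hs',
      ← hcomp _ _ (le_max_left k l), Ext.mk₀_comp_mk₀_assoc, quotProj_comp]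
  · rw [← map_smul, map_eq_zero_iff _ (hinj k), ← Ext.comp_smul, ← ht']
    refine ⟨fun h => ?_, fun h => ?_⟩
    · exact Ext.eq_zero_of_mk₀_comp_eq_zero (quotProj_surjective hk)
        (exists_pow_mem_annihilator_quotient (le_refl (J ^ k)) hJ) (M := ModuleCat.of R R) hys le_rfl _ h
    · rw [h, Ext.comp_zero]

end Generator

section OfList
variable {R : Type u} [CommRing R]

lemma ofList_map_pow_le (n : ℕ) {J : Ideal R} {rs : List R} (hJ : ∀ r ∈ rs, r ∈ J) :
    Ideal.ofList (rs.map (· ^ n)) ≤ J ^ n := by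
  refine Ideal.span_le.mpr fun x hx => ?_
  obtain ⟨r, hr, rfl⟩ := List.mem_map.mp hx
  exact Ideal.pow_mem_pow (hJ r hr) n

lemma ofList_map_pow_anti {n m : ℕ} (h : n ≤ m) (rs : List R) :
    Ideal.ofList (rs.map (· ^ m)) ≤ Ideal.ofList (rs.map (· ^ n)) := by
  refine Ideal.span_le.mpr fun x hx => ?_
  obtain ⟨r, hr, rfl⟩ := List.mem_map.mp hx
  exact Ideal.mem_of_dvd _ (pow_dvd_pow r h) (Ideal.subset_span (List.mem_map_of_mem hr))

end OfList

section LocalRing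
open RingTheory.Sequence
variable {R : Type u} [CommRing R] [IsLocalRing R]

lemma isWeaklyRegular_map_pow_append {M : Type*} [AddCommGroup M] [Module R M] [IsNoetherian R M]
    (n : ℕ) {rs ss : List R} (h : IsWeaklyRegular M (rs ++ ss))
    (hm : ∀ r ∈ rs ++ ss, r ∈ maximalIdeal R) :
    IsWeaklyRegular M (rs.map (· ^ (n + 1)) ++ ss) := by
  induction rs generalizing ss with
  | nil => exact h
  | cons r rs ih =>
    have hperm : (r :: rs ++ ss).Perm (rs ++ (ss ++ [r])) := by
      rw [← List.append_assoc]
      exact (List.perm_append_singleton r (rs ++ ss)).symm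
    have h' := ih (isWeaklyRegular_of_perm_of_subset_maximalIdeal h hperm hm)
      fun x hx => hm x (hperm.mem_iff.mpr hx)
    rw [← List.append_assoc, isWeaklyRegular_append_iff, isWeaklyRegular_singleton_iff] at h'
    refine isWeaklyRegular_of_perm_of_subset_maximalIdeal
      ((isWeaklyRegular_append_iff _ _ [r ^ (n + 1)]).mpr ⟨h'.1,
        (isWeaklyRegular_singleton_iff _ _).mpr (h'.2.pow (n + 1))⟩)
      (List.perm_append_singleton _ _) ?_
    intro x hx
    rw [List.mem_append, List.mem_append, List.mem_map, List.mem_singleton] at hx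
    rcases hx with (⟨y, hy, rfl⟩ | hx) | rfl
    · exact Ideal.pow_mem_of_mem _ (hm y (by simp [hy])) _ n.succ_pos
    · exact hm x (by simp [hx])
    · exact Ideal.pow_mem_of_mem _ (hm r (by simp)) _ n.succ_pos

variable [IsNoetherianRing R]

lemma exists_maximalIdeal_pow_le_ofList {rs : List R} (hrs : IsWeaklyRegular R rs)
    (hm : ∀ r ∈ rs, r ∈ maximalIdeal R) (hdim : ringKrullDim R = rs.length) :
    ∃ k : ℕ, maximalIdeal R ^ k ≤ Ideal.ofList rs := by
  have h := ringKrullDim_add_length_eq_ringKrullDim_of_isRegular rs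
    (IsRegular.of_isWeaklyRegular_of_mem_maximalIdeal R hm hrs)
  have hzero : Ring.KrullDimLE 0 (R ⧸ Ideal.ofList rs) := by
    rw [Ring.krullDimLE_iff]
    exact (ENat.WithBot.add_natCast_cancel.mp (h.trans (hdim.trans (zero_add _).symm))).le
  refine Ideal.exists_pow_le_of_le_radical_of_fg (fun r hr => ?_) (IsNoetherian.noetherian _)
  have hnil : IsNilpotent (Ideal.Quotient.mk (Ideal.ofList rs) r) := by
    rw [nilpotent_iff_mem_prime]
    intro P hP
    have := Ideal.comap_isMaximal_of_surjective (Ideal.Quotient.mk (Ideal.ofList rs))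
      Ideal.Quotient.mk_surjective (K := P)
    rw [← eq_maximalIdeal this] at hr
    exact hr
  obtain ⟨n, hn⟩ := hnil
  exact ⟨n, by rwa [← map_pow, Ideal.Quotient.eq_zero_iff_mem] at hn⟩

lemma exists_isWeaklyRegular_cons [IsDomain R] {rs : List R} (hrs : IsWeaklyRegular R rs)
    (hm : ∀ r ∈ rs, r ∈ maximalIdeal R) (hdim : ringKrullDim R = rs.length)
    {a : R} (ha : a ∈ maximalIdeal R) (ha' : a ≠ 0) :
    ∃ ys : List R, (∀ y ∈ a :: ys, y ∈ maximalIdeal R) ∧ IsWeaklyRegular R (a :: ys) ∧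
      (a :: ys).length = rs.length := by
  have hreg : IsSMulRegular R a := (IsRegular.of_ne_zero ha').left.isSMulRegular
  cases hd : rs.length with
  | zero =>
    have : Ring.KrullDimLE 0 R := by
      rw [Ring.krullDimLE_iff, hdim, hd]
    have := (Ideal.isPrime_bot (α := R)).isMaximal'
    rw [← eq_maximalIdeal this] at ha
    exact (ha' ha).elim
  | succ n =>
    let k := ModuleCat.of R (R ⧸ maximalIdeal R)
    have hk : ∀ r ∈ rs, ∃ n : ℕ, r ^ n ∈ Module.annihilator R k := fun r hr =>
      ⟨1, by rw [pow_one, Ideal.annihilator_quotient]; exact hm r hr⟩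
    have := nontrivial_quotSMulTop_of_mem_maximalIdeal R ha
    obtain ⟨ys, hlen, hys, hys'⟩ := ModuleCat.exists_isRegular_of_exists_subsingleton_ext
      (maximalIdeal R) n (ModuleCat.of R (QuotSMulTop a R))
      (lt_top_iff_ne_top.mpr (Submodule.top_ne_ideal_smul_of_le_jacobson_annihilator
        (maximalIdeal_le_jacobson _)).symm) k
      (by rw [Module.support_eq_zeroLocus, Ideal.annihilator_quotient])
      fun i hi => subsingleton_of_forall_eq 0 (Ext.eq_zero_of_quotSMulTop (n := n + 1)
        (M := ModuleCat.of R R) hreg (fun j hj => Ext.eq_zero_of_isWeaklyRegular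
          (M := ModuleCat.of R R) hk hrs (hd.symm ▸ hj)) (Nat.succ_lt_succ hi))
    refine ⟨ys, ?_, (isWeaklyRegular_cons_iff _ _ _).mpr ⟨hreg, hys'.1⟩, by simp [hlen]⟩
    simpa using ⟨ha, hys⟩

end LocalRing

section Endomorphism
open RingTheory.Sequence
variable {R : Type u} [CommRing R] {H : Type*} [AddCommGroup H] [Module R H]

/-- A compatible sequence of cyclic submodules exhausting `H` forces every endomorphism of `H` to be
multiplication by a scalar. -/
lemma exists_eq_smul_of_isTorsionGenerator {J : Ideal R} [IsPrecomplete J R] {I : ℕ → Ideal R}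
    (hI : Antitone I) (hIJ : ∀ n, I n ≤ J ^ n) {q : ℕ → H}
    (hq : ∀ n, IsTorsionGenerator (I n) (q n)) (hH : ∀ h : H, ∃ k : ℕ, ∀ r ∈ J ^ k, r • h = 0)
    (f : H →ₗ[R] H) : ∃ a : R, ∀ h, f h = a • h := by
  choose a ha using fun n => (hq n).exists_smul_eq (f (q n)) fun r hr => by
    rw [← map_smul, ((hq n).smul_eq_zero_iff r).mpr hr, map_zero]
  obtain ⟨b, hb⟩ := IsPrecomplete.prec (I := J) (M := R) inferInstance (f := a)
    fun {m n} hmn => by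
      rw [SModEq.sub_mem, smul_eq_mul, Ideal.mul_top]
      apply hIJ m
      rw [← (hq m).smul_eq_zero_iff, sub_smul, ha]
      obtain ⟨c, hc⟩ := (hq n).exists_smul_eq (q m) fun r hr =>
        ((hq m).smul_eq_zero_iff r).mpr (hI hmn hr)
      rw [← hc, map_smul, ← ha n, smul_comm, sub_self]
  refine ⟨b, fun h => ?_⟩
  obtain ⟨k, hk⟩ := hH h
  obtain ⟨r, rfl⟩ := (hq k).exists_smul_eq h fun r hr => hk r (hIJ k hr)
  have h := hk _ (by simpa [SModEq.sub_mem] using hb k)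
  rw [sub_smul, sub_eq_zero] at h
  rw [map_smul, ← ha, smul_comm, h]

lemma mul_mem_ofList_append_pow_iff {zs : List R} {a : R} (h : IsWeaklyRegular R (zs ++ [a]))
    (n : ℕ) (r : R) :
    r * a ∈ Ideal.ofList (zs ++ [a ^ (n + 2)]) ↔ r ∈ Ideal.ofList (zs ++ [a ^ (n + 1)]) := by
  have hmem : ∀ x (m : ℕ), x ∈ Ideal.ofList (zs ++ [a ^ m]) ↔
      ∃ c, x - c * a ^ m ∈ Ideal.ofList zs := fun x m => by
    rw [Ideal.ofList_append, Ideal.ofList_singleton, sup_comm, Ideal.mem_span_singleton_sup]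
    constructor
    · rintro ⟨c, y, hy, rfl⟩
      exact ⟨c, by simpa using hy⟩
    · rintro ⟨c, hc⟩
      exact ⟨c, _, hc, by ring⟩
  have hreg := (isWeaklyRegular_singleton_iff _ _).mp ((isWeaklyRegular_append_iff R zs [a]).mp h).2
  rw [hmem, hmem]
  refine exists_congr fun c => ?_
  have heq : r * a - c * a ^ (n + 2) = a * (r - c * a ^ (n + 1)) := by ring
  rw [heq]
  refine ⟨fun hc => ?_, fun hc => Ideal.mul_mem_left _ _ hc⟩
  have := mem_of_isSMulRegular_quotient_of_smul_mem hreg (x := r - c * a ^ (n + 1))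
    (by simpa using hc)
  simpa using this

variable [IsLocalRing R]

lemma IsTorsionGenerator.exists_smul_eq_of_smul_mem {I I' : Ideal R} {q q' : H} {a : R}
    (hq : IsTorsionGenerator I q) (hq' : IsTorsionGenerator I' q') (hI : I ≠ ⊤) {k : ℕ}
    (hk : maximalIdeal R ^ k ≤ I) (ha : ∀ r, r * a ∈ I' ↔ r ∈ I) : ∃ h, a • h = q := by
  obtain ⟨b, hb⟩ := hq.exists_smul_eq (a • q') fun r hr => by
    rw [smul_smul, hq'.smul_eq_zero_iff, ha]
    exact hr
  by_cases hu : IsUnit b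
  · obtain ⟨u, rfl⟩ := hu
    refine ⟨(↑u⁻¹ : R) • q', ?_⟩
    rw [smul_comm, ← hb, smul_smul, Units.inv_mul, one_smul]
  · have hmul : ∀ r, r * b ∈ I → r ∈ I := fun r hr => by
      rwa [← hq.smul_eq_zero_iff, mul_smul, hb, smul_smul, hq'.smul_eq_zero_iff, ha] at hr
    have hpow : ∀ n : ℕ, b ^ n ∉ I := fun n => by
      induction n with
      | zero => rwa [pow_zero, ← Ideal.ne_top_iff_one]
      | succ n ih => exact fun h => ih (hmul _ (pow_succ b n ▸ h))
    exact (hpow k (hk (Ideal.pow_mem_pow ((mem_maximalIdeal b).mpr hu) k))).elim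

end Endomorphism

section Main
open RingTheory.Sequence
variable {R : Type u} [CommRing R] [IsNoetherianRing R] [IsLocalRing R] {d : ℕ}

lemma exists_isTorsionGenerator_ofList (hdim : ringKrullDim R = d) {ys : List R}
    (hm : ∀ y ∈ ys, y ∈ maximalIdeal R) (hys : IsWeaklyRegular R ys) (hd : ys.length = d) :
    ∃ q : (localCohomology (maximalIdeal R) d).obj (ModuleCat.of R R),
      IsTorsionGenerator (Ideal.ofList ys) q := by
  obtain ⟨k, hk⟩ := exists_maximalIdeal_pow_le_ofList hys hm (hd ▸ hdim)
  exact localCohomology_exists_isTorsionGenerator hys (Ideal.span_le.mpr hm) hk hd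

lemma exists_isTorsionGenerator_map_pow (hdim : ringKrullDim R = d) {ys : List R}
    (hm : ∀ y ∈ ys, y ∈ maximalIdeal R) (hys : IsWeaklyRegular R ys) (hd : ys.length = d) (n : ℕ) :
    ∃ q : (localCohomology (maximalIdeal R) d).obj (ModuleCat.of R R),
      IsTorsionGenerator (Ideal.ofList (ys.map (· ^ (n + 1)))) q := by
  refine exists_isTorsionGenerator_ofList hdim (fun y hy => ?_) ?_ (by simpa using hd)
  · obtain ⟨z, hz, rfl⟩ := List.mem_map.mp hy
    exact Ideal.pow_mem_of_mem _ (hm z hz) _ n.succ_pos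
  · simpa using isWeaklyRegular_map_pow_append n (ss := []) (by simpa using hys) (by simpa using hm)

/-- A member of a system of parameters acts surjectively on the top local cohomology. -/
lemma exists_smul_eq_of_isWeaklyRegular_cons (hdim : ringKrullDim R = d) {a : R} {ys : List R}
    (hm : ∀ y ∈ a :: ys, y ∈ maximalIdeal R) (hys : IsWeaklyRegular R (a :: ys))
    (hd : (a :: ys).length = d)
    (h : (localCohomology (maximalIdeal R) d).obj (ModuleCat.of R R)) : ∃ h', a • h' = h := by
  obtain ⟨k, hk⟩ := localCohomology_exists_pow_smul_eq_zero h
  have hperm : (a :: ys).Perm (ys ++ [a]) := (List.perm_append_singleton a ys).symm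
  have hreg := isWeaklyRegular_map_pow_append k
    (isWeaklyRegular_of_perm_of_subset_maximalIdeal hys hperm hm)
    fun y hy => hm y (hperm.mem_iff.mpr hy)
  have hmem (n : ℕ) : ∀ y ∈ ys.map (· ^ (k + 1)) ++ [a ^ (n + 1)], y ∈ maximalIdeal R := by
    intro y hy
    rw [List.mem_append, List.mem_map, List.mem_singleton] at hy
    rcases hy with ⟨z, hz, rfl⟩ | rfl
    · exact Ideal.pow_mem_of_mem _ (hm z (List.mem_cons_of_mem a hz)) _ k.succ_pos
    · exact Ideal.pow_mem_of_mem _ (hm a List.mem_cons_self) _ n.succ_pos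
  have hreg' (n : ℕ) : IsWeaklyRegular R (ys.map (· ^ (k + 1)) ++ [a ^ (n + 1)]) := by
    rw [isWeaklyRegular_append_iff, isWeaklyRegular_singleton_iff] at hreg ⊢
    exact ⟨hreg.1, hreg.2.pow (n + 1)⟩
  have hlen (n : ℕ) : (ys.map (· ^ (k + 1)) ++ [a ^ (n + 1)]).length = d := by simpa using hd
  obtain ⟨q, hq⟩ := exists_isTorsionGenerator_ofList hdim (hmem k) (hreg' k) (hlen k)
  obtain ⟨q', hq'⟩ :=
    exists_isTorsionGenerator_ofList hdim (hmem (k + 1)) (hreg' (k + 1)) (hlen (k + 1))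
  obtain ⟨l, hl⟩ := exists_maximalIdeal_pow_le_ofList (hreg' k) (hmem k) ((hlen k).symm ▸ hdim)
  have hle : Ideal.ofList (ys.map (· ^ (k + 1)) ++ [a ^ (k + 1)]) ≤ maximalIdeal R ^ (k + 1) := by
    rw [show [a ^ (k + 1)] = [a].map (· ^ (k + 1)) from rfl, ← List.map_append]
    exact ofList_map_pow_le _ fun y hy => hm y (hperm.mem_iff.mpr hy)
  obtain ⟨r, rfl⟩ := hq.exists_smul_eq h fun r hr => hk r (Ideal.pow_le_pow_right k.le_succ (hle hr))
  obtain ⟨p, rfl⟩ := hq.exists_smul_eq_of_smul_mem hq'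
    (ne_top_of_le_ne_top (maximalIdeal.isMaximal R).ne_top (Ideal.span_le.mpr (hmem k))) hl
    (mul_mem_ofList_append_pow_iff hreg k)
  exact ⟨r • p, smul_comm a r p⟩

end Main

/-- Let `R` be a `d`-dimensional complete Noetherian local Cohen–Macaulay ring. Then every
nonzero endomorphism of the top local cohomology `H^d_m(R)` is surjective if and only if `R`
is an integral domain. -/
theorem top_localCohomology_endo_surjective_iff_isDomain
    (R : Type u) [CommRing R] [IsNoetherianRing R] [IsLocalRing R]
    [IsAdicComplete (maximalIdeal R) R]
    (hCM : IsCohenMacaulayLocalRing R)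
    (d : ℕ) (hdim : ringKrullDim R = d) :
    (∀ f : ((localCohomology (maximalIdeal R) d).obj (ModuleCat.of R R)) →ₗ[R]
        ((localCohomology (maximalIdeal R) d).obj (ModuleCat.of R R)),
      f ≠ 0 → Function.Surjective f) ↔ IsDomain R := by
  obtain ⟨rs, hm, hreg, hlen⟩ := hCM
  have hlen' : rs.length = d :=
    Nat.cast_injective (R := WithBot ℕ∞) (hlen.trans hdim)
  choose q hq using exists_isTorsionGenerator_map_pow hdim hm hreg.1 hlen'
  have hI (n : ℕ) : Ideal.ofList (rs.map (· ^ (n + 1))) ≤ maximalIdeal R ^ n :=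
    (ofList_map_pow_le (n + 1) hm).trans (Ideal.pow_le_pow_right n.le_succ)
  constructor
  · intro hsurj
    have hne (r : R) (hr : r ≠ 0) : (r • LinearMap.id : _ →ₗ[R]
        (localCohomology (maximalIdeal R) d).obj (ModuleCat.of R R)) ≠ 0 := fun h0 => by
      apply hr
      refine IsHausdorff.haus (I := maximalIdeal R) inferInstance r fun n => ?_
      rw [SModEq.zero, smul_eq_mul, Ideal.mul_top]
      exact hI n (((hq n).smul_eq_zero_iff r).mp (congrArg (fun f => f (q n)) h0))
    have : NoZeroDivisors R := ⟨fun {r s} hrs => by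
      by_contra! h
      obtain ⟨x, hx⟩ := hsurj _ (hne r h.1) (q 0)
      obtain ⟨y, rfl⟩ := hsurj _ (hne s h.2) x
      have h0 : (1 : R) • q 0 = 0 := by
        rw [one_smul, ← hx]
        refine (smul_smul r s y).trans ?_
        rw [hrs, zero_smul]
      have h1 := (ofList_map_pow_le 1 hm) (((hq 0).smul_eq_zero_iff 1).mp h0)
      rw [pow_one] at h1
      exact (Ideal.ne_top_iff_one _).mp (maximalIdeal.isMaximal R).ne_top h1⟩
    exact NoZeroDivisors.to_isDomain R
  · intro hdom f hf
    obtain ⟨a, ha⟩ := exists_eq_smul_of_isTorsionGenerator (J := maximalIdeal R)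
      (fun m n hmn => ofList_map_pow_anti (Nat.succ_le_succ hmn) rs) hI hq
      localCohomology_exists_pow_smul_eq_zero f
    have ha0 : a ≠ 0 := by
      rintro rfl
      exact hf (LinearMap.ext fun h => (ha h).trans (zero_smul R h))
    intro h
    by_cases hu : IsUnit a
    · obtain ⟨u, rfl⟩ := hu
      exact ⟨(↑u⁻¹ : R) • h, by rw [ha, smul_smul, Units.mul_inv, one_smul]⟩
    · obtain ⟨ys, hys, hys', hys''⟩ := exists_isWeaklyRegular_cons hreg.1 hm hlen.symm
        ((mem_maximalIdeal a).mpr hu) ha0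
      obtain ⟨h', hh'⟩ := exists_smul_eq_of_isWeaklyRegular_cons hdim hys hys' (hys''.trans hlen') h
      exact ⟨h', (ha h').trans hh'⟩
end

section
/- Let R be a Noetherian local ring that is not a field. Then the m-adic completion R̂ has finite injective dimension as an R-module if and only if R is Gorenstein. -/
open CategoryTheory IsLocalRing

universe u

/-- An `R`-module `M` has finite injective dimension if `Ext^i_R(-, M)` vanishes for all
sufficiently large `i`. -/
def HasFiniteInjectiveDimension (R : Type u) [CommRing R] (M : ModuleCat.{u} R) : Prop :=
  ∃ n : ℕ, ∀ i : ℕ, n < i → ∀ N : ModuleCat.{u} R,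
    Subsingleton (((Ext R (ModuleCat R) i).obj (Opposite.op N)).obj M)

/-- A Noetherian local ring is Gorenstein if it has finite injective dimension over itself. -/
def IsGorensteinLocalRing (R : Type u) [CommRing R] [IsLocalRing R] : Prop :=
  HasFiniteInjectiveDimension R (ModuleCat.of R R)

/-- If `M` is finitely presented and `N` is flat, then the natural map `M^* ⊗ N → Hom(M, N)` is
bijective. -/
theorem dualTensorHom_bijective_of_finitePresentation_of_flat {R M N : Type*} [CommRing R]
    [AddCommGroup M] [Module R M] [AddCommGroup N] [Module R N]
    [Module.FinitePresentation R M] [Module.Flat R N] :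
    Function.Bijective (dualTensorHom R M N) := by
  obtain ⟨n, m, f, g, hf, hfg⟩ := Module.FinitePresentation.exists_fin' R M
  have hfM := LinearMap.congr_fun (dualTensorHom_comp_rTensor_dualMap (P := N) f)
  have hgM := LinearMap.congr_fun (dualTensorHom_comp_rTensor_dualMap (P := N) g)
  have hinj : Function.Injective (f.dualMap.rTensor N) :=
    Module.Flat.rTensor_preserves_injective_linearMap _
      (LinearMap.dualMap_injective_of_surjective hf)
  have hexact : Function.Exact (f.dualMap.rTensor N) (g.dualMap.rTensor N) :=
    Module.Flat.rTensor_exact N (LinearMap.exact_lcomp_of_exact_of_surjective R hfg hf)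
  have h₀ : Function.Bijective (dualTensorHom R (Fin n → R) N) := dualTensorHom_bijective ..
  have h₁ : Function.Bijective (dualTensorHom R (Fin m → R) N) := dualTensorHom_bijective ..
  constructor
  · refine Function.Injective.of_comp (f := f.lcomp R N) ?_
    rw [← LinearMap.coe_comp, ← dualTensorHom_comp_rTensor_dualMap]
    exact h₀.1.comp hinj
  · intro h
    obtain ⟨t, ht⟩ := h₀.2 (f.lcomp R N h)
    have htg : g.dualMap.rTensor N t = 0 := by
      apply h₁.1
      rw [map_zero]
      refine (hgM t).trans ?_
      ext x
      simp [ht, hfg.apply_apply_eq_zero]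
    obtain ⟨s, rfl⟩ := (hexact t).1 htg
    refine ⟨s, LinearMap.lcomp_injective_of_surjective (S := R) (N := N) f hf ?_⟩
    exact (hfM s).symm.trans ht

/-- Every map `K → R` extends along `i : K → P` if and only if every map `K → N` does, for a
faithfully flat module `N`. -/
theorem lcomp_surjective_iff_dualMap_surjective {R K P N : Type*} [CommRing R]
    [AddCommGroup K] [Module R K] [AddCommGroup P] [Module R P] [AddCommGroup N] [Module R N]
    [Module.FinitePresentation R K] [Module.FinitePresentation R P] [Module.FaithfullyFlat R N]
    (i : K →ₗ[R] P) :
    Function.Surjective (i.lcomp R N) ↔ Function.Surjective i.dualMap := by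
  have hK : Function.Bijective (dualTensorHom R K N) :=
    dualTensorHom_bijective_of_finitePresentation_of_flat
  have hP : Function.Bijective (dualTensorHom R P N) :=
    dualTensorHom_bijective_of_finitePresentation_of_flat
  rw [← Module.FaithfullyFlat.lTensor_surjective_iff_surjective R N i.dualMap,
    LinearMap.lTensor_surj_iff_rTensor_surj,
    ← Function.Surjective.of_comp_iff (i.lcomp R N) hP.surjective, ← LinearMap.coe_comp,
    ← dualTensorHom_comp_rTensor_dualMap, LinearMap.coe_comp]
  exact Function.Surjective.of_comp_iff' hK _

/-- The completion of a Noetherian local ring is faithfully flat. -/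
theorem AdicCompletion.faithfullyFlat_maximalIdeal (R : Type*) [CommRing R] [IsNoetherianRing R]
    [IsLocalRing R] : Module.FaithfullyFlat R (AdicCompletion (maximalIdeal R) R) where
  submodule_ne_top := by
    intro m hm h
    obtain rfl := IsLocalRing.eq_maximalIdeal hm
    let e := AdicCompletion.eval (maximalIdeal R) R 1
    have hle : maximalIdeal R • (⊤ : Submodule R (AdicCompletion (maximalIdeal R) R)) ≤
        LinearMap.ker e := by
      rw [Submodule.smul_le]
      intro r hr x _
      rw [LinearMap.mem_ker, map_smul]
      obtain ⟨y, hy⟩ := Submodule.Quotient.mk_surjective _ (e x)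
      rw [← hy, ← Submodule.Quotient.mk_smul, Submodule.Quotient.mk_eq_zero]
      exact Submodule.smul_mem_smul (by simpa using hr) trivial
    have h1 : e (AdicCompletion.of (maximalIdeal R) R 1) = 0 := hle (by rw [h]; trivial)
    rw [AdicCompletion.eval_of, Submodule.mkQ_apply, Submodule.Quotient.mk_eq_zero] at h1
    simp at h1

namespace CategoryTheory.Abelian

universe w

variable {R : Type u} [CommRing R]

/-- Both definitions of `Ext` on `R`-modules vanish simultaneously in positive degrees. -/
theorem subsingleton_leftDerived_ext_iff (N M : ModuleCat.{u} R) (i : ℕ) :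
    Subsingleton (((_root_.Ext R (ModuleCat R) (i + 1)).obj (Opposite.op N)).obj M) ↔
      Subsingleton (Ext N M (i + 1)) := by
  let P := projectiveResolution N
  trans ∀ f : P.complex.X (i + 1) ⟶ M, P.complex.d (i + 2) (i + 1) ≫ f = 0 →
    ∃ g : P.complex.X i ⟶ M, P.complex.d (i + 1) i ≫ g = f
  · rw [← ModuleCat.isZero_iff_subsingleton, (P.isoExt (R := R) (i + 1) M).isZero_iff,
      ← HomologicalComplex.exactAt_iff_isZero_homology,
      HomologicalComplex.exactAt_iff' _ i (i + 1) (i + 2) (by simp) (by simp),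
      ShortComplex.moduleCat_exact_iff]
    rfl
  · refine ⟨fun h ↦ subsingleton_of_forall_eq 0 fun α ↦ ?_, fun h f hf ↦ ?_⟩
    · obtain ⟨f, hf, rfl⟩ := P.extMk_surjective α (i + 2) rfl
      exact (P.extMk_eq_zero_iff f _ rfl hf i rfl).2 (h f hf)
    · exact (P.extMk_eq_zero_iff f _ rfl hf i rfl).1 (Subsingleton.elim _ _)

/-- If `S` is a short exact sequence with projective middle term, then `Ext¹(X₃, M)` vanishes if
and only if every map `X₁ ⟶ M` extends to `X₂`. -/
theorem Ext.subsingleton_one_iff {C : Type*} [Category* C] [Abelian C] [HasExt.{w} C]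
    {S : ShortComplex C} (hS : S.ShortExact) [Projective S.X₂] (M : C) :
    Subsingleton (Ext S.X₃ M 1) ↔ ∀ f : S.X₁ ⟶ M, ∃ g : S.X₂ ⟶ M, S.f ≫ g = f := by
  refine ⟨fun h f ↦ ?_, fun h ↦ subsingleton_of_forall_eq 0 fun α ↦ ?_⟩
  · obtain ⟨x, hx⟩ := Ext.contravariant_sequence_exact₁ hS M (Ext.mk₀ f) (add_zero 1)
      (Subsingleton.elim _ _)
    obtain ⟨g, rfl⟩ := Ext.mk₀_bijective _ _ |>.2 x
    exact ⟨g, (Ext.mk₀_bijective _ _).1 (by simpa using hx)⟩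
  · obtain ⟨x, rfl⟩ := Ext.contravariant_sequence_exact₃ hS M α (Ext.eq_zero_of_projective _)
      (add_zero 1)
    obtain ⟨f, rfl⟩ := Ext.mk₀_bijective _ _ |>.2 x
    obtain ⟨g, rfl⟩ := h f
    rw [← Ext.mk₀_comp_mk₀, hS.extClass_comp_assoc]

/-- Dimension shifting along a short exact sequence with projective middle term. -/
theorem Ext.subsingleton_succ_iff_of_projective {C : Type*} [Category* C] [Abelian C]
    [HasExt.{w} C] {S : ShortComplex C} (hS : S.ShortExact) [Projective S.X₂] (M : C) (i : ℕ) :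
    Subsingleton (Ext S.X₃ M (i + 2)) ↔ Subsingleton (Ext S.X₁ M (i + 1)) := by
  refine ⟨fun h ↦ subsingleton_of_forall_eq 0 fun α ↦ ?_,
    fun h ↦ subsingleton_of_forall_eq 0 fun α ↦ ?_⟩
  · obtain ⟨x, rfl⟩ := Ext.contravariant_sequence_exact₁ hS M α (by omega : 1 + (i + 1) = i + 2)
      (Subsingleton.elim _ _)
    rw [Ext.eq_zero_of_projective x, Ext.comp_zero]
  · obtain ⟨x, rfl⟩ := Ext.contravariant_sequence_exact₃ hS M α (Ext.eq_zero_of_projective _)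
      (by omega : 1 + (i + 1) = i + 2)
    rw [Subsingleton.elim x 0, Ext.comp_zero]

/-- For finitely generated `N` over a Noetherian ring, `Ext(N, R)` and `Ext(N, F)` vanish in the
same positive degrees when `F` is faithfully flat. -/
theorem Ext.subsingleton_iff_of_faithfullyFlat [IsNoetherianRing R] (F : ModuleCat.{u} R)
    [Module.FaithfullyFlat R F] (i : ℕ) (N : ModuleCat.{u} R) [Module.Finite R N] :
    Subsingleton (Ext N F (i + 1)) ↔ Subsingleton (Ext N (ModuleCat.of R R) (i + 1)) := by
  induction i generalizing N with
  | zero =>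
    obtain ⟨P, _, _, _, _, f, hf⟩ := Module.exists_finite_presentation R N
    have hS := LinearMap.shortExact_shortComplexKer hf
    have : Projective f.shortComplexKer.X₂ :=
      ModuleCat.projective_of_free (Module.Free.chooseBasis R P)
    have key (M : ModuleCat.{u} R) : Subsingleton (Ext N M 1) ↔
        Function.Surjective ((LinearMap.ker f).subtype.lcomp R M) := by
      refine (Ext.subsingleton_one_iff hS M).trans ⟨fun h φ ↦ ?_, fun h φ ↦ ?_⟩
      · obtain ⟨g, hg⟩ := h (ModuleCat.ofHom φ)
        exact ⟨g.hom, congr(($hg).hom)⟩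
      · obtain ⟨g, hg⟩ := h φ.hom
        exact ⟨ModuleCat.ofHom g, ModuleCat.hom_ext hg⟩
    have := Module.finitePresentation_of_finite R (LinearMap.ker f)
    have := Module.finitePresentation_of_finite R P
    exact (key F).trans ((lcomp_surjective_iff_dualMap_surjective _).trans (key (.of R R)).symm)
  | succ i ih =>
    obtain ⟨P, _, _, _, _, f, hf⟩ := Module.exists_finite_presentation R N
    have hS := LinearMap.shortExact_shortComplexKer hf
    have : Projective f.shortComplexKer.X₂ :=
      ModuleCat.projective_of_free (Module.Free.chooseBasis R P)
    exact (Ext.subsingleton_succ_iff_of_projective hS F i).trans <|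
      (ih (.of R (LinearMap.ker f))).trans
        (Ext.subsingleton_succ_iff_of_projective hS _ i).symm

end CategoryTheory.Abelian

open CategoryTheory.Abelian

/-- Injective dimension can be tested on cyclic modules. -/
theorem ModuleCat.hasInjectiveDimensionLE_of_subsingleton_ext_quotient {R : Type u} [CommRing R]
    (n : ℕ) (M : ModuleCat.{u} R)
    (h : ∀ I : Ideal R, Subsingleton (Abelian.Ext (ModuleCat.of R (R ⧸ I)) M (n + 1))) :
    HasInjectiveDimensionLE M n := by
  induction n generalizing M with
  | zero =>
    rw [HasInjectiveDimensionLE, zero_add, ← injective_iff_hasInjectiveDimensionLT_one,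
      ← Module.injective_iff_injective_object, ← Module.Baer.iff_injective]
    intro I φ
    let S : ShortComplex (ModuleCat.{u} R) := ModuleCat.shortComplexOfCompEqZero I.subtype I.mkQ
      (LinearMap.exact_subtype_mkQ I).linearMap_comp_eq_zero
    have hS : S.ShortExact := ModuleCat.shortComplex_shortExact S
      (LinearMap.exact_subtype_mkQ I) I.subtype_injective I.mkQ_surjective
    have : Projective S.X₂ := ModuleCat.projective_of_free (Module.Basis.singleton Unit R)
    obtain ⟨g, hg⟩ := (Abelian.Ext.subsingleton_one_iff hS M).1 (h I) (ModuleCat.ofHom φ)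
    exact ⟨g.hom, fun x hx ↦ congr(($hg).hom ⟨x, hx⟩)⟩
  | succ n ih =>
    obtain ⟨J, _, f, _⟩ := EnoughInjectives.presentation M
    let S := ShortComplex.mk f (Limits.cokernel.π f) (Limits.cokernel.condition f)
    have hS : S.ShortExact := { exact := ShortComplex.exact_cokernel f }
    refine (hS.hasInjectiveDimensionLT_X₃_iff n ‹_›).1 (ih _ fun I ↦ ?_)
    refine subsingleton_of_forall_eq 0 fun α ↦ ?_
    obtain ⟨x, rfl⟩ := Abelian.Ext.covariant_sequence_exact₃ _ hS α rfl
      ((h I).elim _ _)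
    rw [Abelian.Ext.eq_zero_of_injective x, Abelian.Ext.zero_comp]

/-- Finite injective dimension amounts to the eventual vanishing of `Ext` from cyclic modules. -/
theorem hasFiniteInjectiveDimension_iff_exists_quotient (R : Type u) [CommRing R]
    (M : ModuleCat.{u} R) : HasFiniteInjectiveDimension R M ↔
      ∃ n : ℕ, ∀ i : ℕ, n < i → ∀ I : Ideal R,
        Subsingleton (Abelian.Ext (ModuleCat.of R (R ⧸ I)) M i) := by
  refine ⟨fun ⟨n, h⟩ ↦ ⟨n, fun i hi I ↦ ?_⟩, fun ⟨n, h⟩ ↦ ⟨n, fun i hi N ↦ ?_⟩⟩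
  · obtain ⟨i, rfl⟩ := Nat.exists_eq_succ_of_ne_zero (Nat.ne_zero_of_lt hi)
    exact (subsingleton_leftDerived_ext_iff _ M i).1 (h _ hi _)
  · have := ModuleCat.hasInjectiveDimensionLE_of_subsingleton_ext_quotient n M (h _ n.lt_succ_self)
    obtain ⟨i, rfl⟩ := Nat.exists_eq_succ_of_ne_zero (Nat.ne_zero_of_lt hi)
    exact (subsingleton_leftDerived_ext_iff N M i).2
      (HasInjectiveDimensionLT.subsingleton M (n + 1) _ hi N)

/-- Let `R` be a Noetherian local ring that is not a field. Then the `m`-adic completion `R̂`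
has finite injective dimension as an `R`-module if and only if `R` is Gorenstein. -/
theorem adicCompletion_finite_injdim_iff_gorenstein
    (R : Type u) [CommRing R] [IsNoetherianRing R] [IsLocalRing R] (hR : ¬ IsField R) :
    HasFiniteInjectiveDimension R
      (ModuleCat.of R (AdicCompletion (maximalIdeal R) R)) ↔
    IsGorensteinLocalRing R := by
  have : Module.FaithfullyFlat R (ModuleCat.of R (AdicCompletion (maximalIdeal R) R)) :=
    AdicCompletion.faithfullyFlat_maximalIdeal R
  rw [IsGorensteinLocalRing, hasFiniteInjectiveDimension_iff_exists_quotient,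
    hasFiniteInjectiveDimension_iff_exists_quotient]
  refine exists_congr fun n ↦ forall_congr' fun i ↦ forall_congr' fun hi ↦ forall_congr' fun I ↦ ?_
  obtain ⟨i, rfl⟩ := Nat.exists_eq_succ_of_ne_zero (Nat.ne_zero_of_lt hi)
  exact Abelian.Ext.subsingleton_iff_of_faithfullyFlat _ i _
end

section
/- Let R be a Noetherian local domain of dimension d > 1 and let x be a nonzero element of the maximal ideal. Then the localization R_x = R[1/x] is a proper R-submodule of Q = Frac(R), and Hom_R(R_x, R̂) = 0, where R̂ is the m-adic completion. -/
open IsLocalRing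

set_option synthInstance.maxHeartbeats 1000000

universe u

/-- An element of `R[1/x]` becomes an element of `R` after multiplication by a power of `x`. -/
theorem exists_pow_mul_eq_algebraMap_of_mem_adjoin_inv {R K : Type*} [CommRing R] [Field K]
    [Algebra R K] {x : R} (hx : algebraMap R K x ≠ 0) {z : K}
    (hz : z ∈ Algebra.adjoin R {(algebraMap R K x)⁻¹}) :
    ∃ (n : ℕ) (r : R), algebraMap R K x ^ n * z = algebraMap R K r := by
  induction hz using Algebra.adjoin_induction with
  | mem z hz =>
    rw [Set.mem_singleton_iff] at hz
    exact ⟨1, 1, by simp [hz, hx]⟩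
  | algebraMap r => exact ⟨0, r, by simp⟩
  | add y z _ _ hy hz =>
    obtain ⟨m, r, hr⟩ := hy
    obtain ⟨n, s, hs⟩ := hz
    refine ⟨m + n, x ^ n * r + x ^ m * s, ?_⟩
    simp only [map_add, map_mul, map_pow, ← hr, ← hs]
    ring
  | mul y z _ _ hy hz =>
    obtain ⟨m, r, hr⟩ := hy
    obtain ⟨n, s, hs⟩ := hz
    refine ⟨m + n, r * s, ?_⟩
    simp only [map_mul, ← hr, ← hs]
    ring

/-- If `R[1/x]` is the whole fraction field, then `x` lies in every nonzero prime ideal. -/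
theorem mem_of_adjoin_inv_eq_top {R K : Type*} [CommRing R] [IsDomain R] [Field K]
    [Algebra R K] [IsFractionRing R K] {x : R} (hx : x ≠ 0)
    (h : Algebra.adjoin R {(algebraMap R K x)⁻¹} = ⊤) {p : Ideal R} [p.IsPrime] (hp : p ≠ ⊥) :
    x ∈ p := by
  obtain ⟨y, hyp, hy⟩ := Submodule.exists_mem_ne_zero_of_ne_bot hp
  have hinj := IsFractionRing.injective R K
  have hy' : algebraMap R K y ≠ 0 := by simpa using hy
  obtain ⟨n, r, hr⟩ := exists_pow_mul_eq_algebraMap_of_mem_adjoin_inv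
    (by simpa using hx : algebraMap R K x ≠ 0) (h ▸ Algebra.mem_top : (algebraMap R K y)⁻¹ ∈ _)
  have hxn : x ^ n = r * y := by
    apply hinj
    rw [map_pow, map_mul, ← hr, inv_mul_cancel_right₀ hy']
  exact ‹p.IsPrime›.mem_of_pow_mem n (hxn ▸ p.mul_mem_left r hyp)

/-- A Noetherian local domain of dimension `> 1` has, for each nonzero `x`, a nonzero prime ideal
avoiding `x`. -/
theorem exists_isPrime_ne_bot_notMem {R : Type*} [CommRing R] [IsNoetherianRing R]
    [IsLocalRing R] [IsDomain R] (hdim : 1 < ringKrullDim R) {x : R} (hx0 : x ≠ 0) :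
    ∃ p : Ideal R, p.IsPrime ∧ p ≠ ⊥ ∧ x ∉ p := by
  by_contra! H
  have hfin := (Ideal.span {x}).finite_minimalPrimes_of_isNoetherianRing R
  obtain ⟨y, hym, hy⟩ : ∃ y ∈ maximalIdeal R, y ≠ 0 ∧
      ∀ q ∈ (Ideal.span {x}).minimalPrimes, y ∉ q := by
    by_contra! hcover
    obtain ⟨q, hq, hmq⟩ := (Ideal.subset_union_prime (s := insert ⊥ hfin.toFinset) (f := id) ⊥ ⊥
      (fun q hq hq0 _ ↦ by
        rw [Finset.mem_insert, hfin.mem_toFinset] at hq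
        exact (hq.resolve_left hq0).isPrime) (I := maximalIdeal R)).1 fun y hy ↦ by
          by_cases hy0 : y = 0
          · simp [hy0]
          · obtain ⟨q, hq, hyq⟩ := hcover y hy hy0
            simp only [Set.mem_iUnion]
            exact ⟨q, by simp [hq], hyq⟩
    have hle : q.height ≤ 1 := by
      rw [Finset.mem_insert, hfin.mem_toFinset] at hq
      obtain rfl | hq := hq
      · simp
      · exact Ideal.height_le_one_of_isPrincipal_of_mem_minimalPrimes _ _ hq
    rw [← maximalIdeal_height_eq_ringKrullDim] at hdim
    exact (((Ideal.height_mono hmq).trans hle).trans_lt (by exact_mod_cast hdim)).false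
  obtain ⟨hy0, hy⟩ := hy
  obtain ⟨p, hp, -⟩ := Ideal.exists_minimalPrimes_le
    ((Ideal.span_singleton_le_iff_mem _).2 hym)
  have hpp := hp.isPrime
  have hyp : y ∈ p := (Ideal.span_singleton_le_iff_mem _).1 hp.1.2
  have hxp : x ∈ p := H p hpp fun h ↦ hy0 (by simpa [h] using hyp)
  obtain ⟨q, hq, hqp⟩ := Ideal.exists_minimalPrimes_le
    ((Ideal.span_singleton_le_iff_mem _).2 hxp)
  have hqq := hq.isPrime
  have hxq : x ∈ q := (Ideal.span_singleton_le_iff_mem _).1 hq.1.2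
  have hlt : q < p := lt_of_le_of_ne hqp fun h ↦ hy q hq (h ▸ hyp)
  have hlt' := (Ideal.height_strict_mono_of_isPrime_of_isPrime hlt).trans_le
    (Ideal.height_le_one_of_isPrincipal_of_mem_minimalPrimes _ p hp)
  rw [Order.lt_one_iff, Ideal.height_eq_zero_iff_eq_bot] at hlt'
  exact hx0 (by simpa [hlt'] using hxq)

/-- A linear map from an `x`-divisible module to an `I`-adically separated module vanishes
when `x ∈ I`. -/
theorem LinearMap.eq_zero_of_smul_surjective_of_isHausdorff {R M N : Type*} [CommRing R]
    [AddCommGroup M] [Module R M] [AddCommGroup N] [Module R N] {I : Ideal R} [IsHausdorff I N]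
    {x : R} (hx : x ∈ I) (hM : Function.Surjective fun m : M ↦ x • m) (f : M →ₗ[R] N) :
    f = 0 := by
  ext m
  refine IsHausdorff.haus ‹_› (f m) fun n ↦ SModEq.zero.2 ?_
  obtain ⟨m', rfl⟩ : ∃ m', x ^ n • m' = m := by
    have := hM.iterate n m
    rwa [smul_iterate] at this
  rw [map_smul]
  exact Submodule.smul_mem_smul (Ideal.pow_mem_pow hx n) trivial

/-- Let `R` be a Noetherian local domain of dimension `> 1` and `x` a nonzero element of the
maximal ideal. Then the localization `R_x = R[1/x]`, viewed inside `Q = Frac(R)`, is a proper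
subring of `Q`, and `Hom_R(R_x, R̂) = 0` where `R̂` is the `m`-adic completion. -/
theorem away_proper_and_hom_completion_eq_zero
    (R : Type u) [CommRing R] [IsNoetherianRing R] [IsLocalRing R] [IsDomain R]
    (hdim : 1 < ringKrullDim R)
    (x : R) (hx0 : x ≠ 0) (hx : x ∈ maximalIdeal R) :
    Algebra.adjoin R {(algebraMap R (FractionRing R) x)⁻¹} ≠ ⊤ ∧
    Subsingleton ((Algebra.adjoin R {(algebraMap R (FractionRing R) x)⁻¹}) →ₗ[R]
      (AdicCompletion (maximalIdeal R) R)) := by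
  refine ⟨fun h ↦ ?_, subsingleton_of_forall_eq 0 fun f ↦
    f.eq_zero_of_smul_surjective_of_isHausdorff hx fun z ↦ ?_⟩
  · obtain ⟨p, hp, hp0, hxp⟩ := exists_isPrime_ne_bot_notMem hdim hx0
    exact hxp (mem_of_adjoin_inv_eq_top hx0 h hp0)
  · have hx' : algebraMap R (FractionRing R) x ≠ 0 := by simpa using hx0
    refine ⟨⟨_, Algebra.self_mem_adjoin_singleton R _⟩ * z, Subtype.ext ?_⟩
    simp [Algebra.smul_def, hx']
end
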